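/- arXiv:2407.18315 — 4 statements merged into one kernel-verified Lean document; each statement's English description precedes it below -/
import Mathlib

section
/- Let (X,d,μ) satisfy the standing assumptions, suppose μ is Ahlfors s-regular, and suppose (X,d,μ) is of globally p-controlled geometry, where 1 ≤ p < s. Let q = ps/(s−p), so that 1/q + 1/s = 1/p. If f : X → ℝ is locally integrable and has an upper gradient g with ∫_X g^p dμ < ∞ (i.e., f ∈ D^{1,p}(X)), then there exists a constant c ∈ ℝ such that ∫_X |f − c|^q dμ < ∞. -/
/-!
The proof combines a weak-type Sobolev inequality with Maz'ya's truncation argument.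

*Weak type.* Let `(u, G)` be a function–upper-gradient pair with `∫ G ^ p ≤ I`. By the Poincaré
inequality and Ahlfors regularity, the averages of `u` over nested balls of comparable radii differ
by at most `D r (r ^ (-s) ∫_{B(x, lam r)} G ^ p) ^ (1/p) ≤ D I ^ (1/p) r ^ (1 - s/p)`
(`average_step`). Since `p < s`, the averages over `B(x, r)` converge as `r → ∞` to a constant `c`
independent of `x`, with a rate (`exists_limit_of_step`). Given `t > 0`, choose `R` such that every
average at radius `R` is within `t / 2` of `c`. If `x` is a Lebesgue point with `|u x - c| > t`,
then the dyadic averages drift by more than `t / 2` on the way from radius `R` down to `0`, so at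
some radius `r = R / 2 ^ k` one has `r ^ s ≤ (4 R D / t) ^ p ∫_{B(x, lam r)} G ^ p`. Vitali's
covering theorem then gives `μ {|u - c| > t} ≤ K I ^ (q/p) / t ^ q` (`exists_weak_type`).

*From weak to strong type.* Let `c` be the constant for `f` and `w = |f - c|`. The truncation of
`w` at the levels `2 ^ k` and `2 ^ (k+1)` has an upper gradient that is essentially `g` restricted
to `S k = {2 ^ k < w ≤ 2 ^ (k+1)}` (`IsUpperGradient.clamp`). It equals `2 ^ k` off a set of finite
measure, so as `μ univ = ∞` the constant which the weak-type inequality provides for it is `2 ^ k`.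
Hence `2 ^ (k q) μ (S (k+1))` is at most a multiple of `I k ^ (q/p)`, where `I k` is, up to a
constant and a summable error, the energy of `g` on `S k`. These energies are summable and
`q/p ≥ 1`, so summing over `k : ℤ` bounds `∫ w ^ q`.
-/

open MeasureTheory Metric Set Filter
open scoped ENNReal NNReal Topology

/-- `g` is an upper gradient of `u`: for every `L ≥ 0` and every `1`-Lipschitz curve
`γ : [0,L] → X`, one has `|u(γ L) - u(γ 0)| ≤ ∫₀^L g(γ t) dt`. -/
def IsUpperGradient {X : Type*} [MetricSpace X] (g : X → ℝ≥0∞) (u : X → ℝ) : Prop :=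
  ∀ (L : ℝ) (γ : ℝ → X), 0 ≤ L → LipschitzOnWith 1 γ (Set.Icc 0 L) →
    ENNReal.ofReal |u (γ L) - u (γ 0)| ≤ ∫⁻ t in Set.Icc 0 L, g (γ t)

/-- `(X,d,μ)` is of globally `p`-controlled geometry: the measure is globally doubling and a
global `p`-Poincaré inequality holds for function–upper-gradient pairs. -/
def GloballyControlledGeometry {X : Type*} [MetricSpace X] [MeasurableSpace X]
    (p : ℝ) (μ : Measure X) : Prop :=
  ∃ Cd C lam : ℝ, 1 ≤ Cd ∧ 0 < C ∧ 0 < lam ∧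
    (∀ (x : X) (r : ℝ), 0 < r →
      μ (ball x (2 * r)) ≤ ENNReal.ofReal Cd * μ (ball x r)) ∧
    (∀ (u : X → ℝ) (g : X → ℝ≥0∞), LocallyIntegrable u μ → Measurable g →
      IsUpperGradient g u → ∀ (x : X) (r : ℝ), 0 < r →
      ENNReal.ofReal (⨍ y in ball x r, |u y - ⨍ z in ball x r, u z ∂μ| ∂μ) ≤
        ENNReal.ofReal (C * r) *
          ((∫⁻ y in ball x (lam * r), g y ^ p ∂μ) / μ (ball x (lam * r))) ^ (1 / p))

/-- `μ` is Ahlfors `s`-regular: `C⁻¹ rˢ ≤ μ(B(x,r)) ≤ C rˢ` for all `x` and `r > 0`. -/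
def AhlforsRegular {X : Type*} [MetricSpace X] [MeasurableSpace X]
    (s : ℝ) (μ : Measure X) : Prop :=
  ∃ C : ℝ, 1 ≤ C ∧ ∀ (x : X) (r : ℝ), 0 < r →
    ENNReal.ofReal (r ^ s / C) ≤ μ (ball x r) ∧ μ (ball x r) ≤ ENNReal.ofReal (C * r ^ s)

/-! ### Truncation of function–upper-gradient pairs -/

lemma IsUpperGradient.segment {X : Type*} [MetricSpace X] {g : X → ℝ≥0∞} {u : X → ℝ}
    (h : IsUpperGradient g u) {L : ℝ} {γ : ℝ → X} (hγ : LipschitzOnWith 1 γ (Icc 0 L))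
    {a b : ℝ} (ha : 0 ≤ a) (hab : a ≤ b) (hb : b ≤ L) :
    ENNReal.ofReal |u (γ b) - u (γ a)| ≤ ∫⁻ t in Icc a b, g (γ t) := by
  have h1 := h (b - a) (fun t => γ (a + t)) (by linarith) (by
    intro x hx y hy
    have := hγ (x := a + x) ⟨by linarith [hx.1], by linarith [hx.2]⟩ (y := a + y)
      ⟨by linarith [hy.1], by linarith [hy.2]⟩
    simpa using this)
  simp only [add_sub_cancel, add_zero] at h1
  refine h1.trans (le_of_eq ?_)
  rw [← lintegral_indicator measurableSet_Icc, ← lintegral_indicator measurableSet_Icc,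
    ← lintegral_add_left_eq_self ((Icc a b).indicator _) a]
  congr 1
  ext t
  by_cases ht : t ∈ Icc 0 (b - a)
  · rw [indicator_of_mem ht, indicator_of_mem]
    exact ⟨by linarith [ht.1], by linarith [ht.2]⟩
  · rw [indicator_of_notMem ht, indicator_of_notMem]
    intro h'
    exact ht ⟨by linarith [h'.1], by linarith [h'.2]⟩

lemma IsUpperGradient.continuousOn {X : Type*} [MetricSpace X] {g : X → ℝ≥0∞} {u : X → ℝ}
    (h : IsUpperGradient g u) {L : ℝ} {γ : ℝ → X} (hγ : LipschitzOnWith 1 γ (Icc 0 L))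
    (hfin : ∫⁻ t in Icc 0 L, g (γ t) ≠ ⊤) : ContinuousOn (fun t => u (γ t)) (Icc 0 L) := by
  rw [Metric.continuousOn_iff]
  intro b hb ε hε
  obtain ⟨δ, hδ, H⟩ := exists_pos_setLIntegral_lt_of_measure_lt hfin
    (ε := ENNReal.ofReal ε) (by simpa using hε)
  obtain ⟨δ', hδ', hδδ⟩ := ENNReal.lt_iff_exists_real_btwn.1 hδ
  have hδ'0 : 0 < δ' := by simpa using hδδ.1
  have key : ∀ x ∈ Icc 0 L, ∀ y ∈ Icc 0 L, x ≤ y → y - x < δ' →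
      |u (γ y) - u (γ x)| < ε := by
    intro x hx y hy hxy hd
    have h1 := h.segment hγ hx.1 hxy hy.2
    have h2 := H (Icc x y) (by
      refine (Measure.restrict_apply_le _ _).trans_lt ?_
      rw [Real.volume_Icc]
      exact ((ENNReal.ofReal_lt_ofReal_iff hδ'0).2 hd).trans hδδ.2)
    rw [Measure.restrict_restrict measurableSet_Icc,
      inter_eq_left.2 (Icc_subset_Icc hx.1 hy.2)] at h2
    exact (ENNReal.ofReal_lt_ofReal_iff hε).1 (h1.trans_lt h2)
  refine ⟨δ', hδ'0, fun a ha hab => ?_⟩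
  rw [Real.dist_eq] at hab ⊢
  rcases le_total a b with hle | hle
  · rw [abs_sub_comm]
    rw [abs_sub_comm] at hab
    exact key a ha b hb hle ((le_abs_self _).trans_lt hab)
  · exact key b hb a ha hle ((le_abs_self _).trans_lt hab)

lemma clamp_crossing_aux {h : ℝ → ℝ} {L a b : ℝ} (hL : 0 ≤ L) (hc : ContinuousOn h (Icc 0 L))
    (hlt : max a (min (h 0) b) < max a (min (h L) b)) :
    ∃ t₀ t₁, 0 ≤ t₀ ∧ t₀ ≤ t₁ ∧ t₁ ≤ L ∧
      |max a (min (h L) b) - max a (min (h 0) b)| ≤ |h t₁ - h t₀| ∧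
      ∀ t ∈ Ioo t₀ t₁, a < h t ∧ h t < b := by
  set α := max a (min (h 0) b) with hα
  set β := max a (min (h L) b) with hβ
  have h0 : h 0 ≤ α := by
    by_contra! hcon
    grind
  have h1 : β ≤ h L := by
    by_contra! hcon
    grind
  have haα : a ≤ α := le_max_left _ _
  have hβb : β ≤ b := by grind
  have hK : IsCompact (Icc 0 L ∩ h ⁻¹' (Iic α)) :=
    isCompact_Icc.of_isClosed_subset (hc.preimage_isClosed_of_isClosed isClosed_Icc isClosed_Iic)
      inter_subset_left
  obtain ⟨t₀, ⟨ht₀, ht₀α⟩, hmax⟩ := hK.exists_isGreatest ⟨0, ⟨le_rfl, hL⟩, h0⟩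
  have hK' : IsCompact (Icc t₀ L ∩ h ⁻¹' (Ici β)) :=
    isCompact_Icc.of_isClosed_subset
      ((hc.mono (Icc_subset_Icc ht₀.1 le_rfl)).preimage_isClosed_of_isClosed
      isClosed_Icc isClosed_Ici) inter_subset_left
  obtain ⟨t₁, ⟨ht₁, ht₁β⟩, hmin⟩ := hK'.exists_isLeast ⟨L, ⟨ht₀.2, le_rfl⟩, h1⟩
  simp only [mem_preimage, mem_Iic, mem_Ici] at ht₀α ht₁β
  refine ⟨t₀, t₁, ht₀.1, ht₁.1, ht₁.2, ?_, fun t ht => ⟨?_, ?_⟩⟩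
  · rw [abs_of_pos (by linarith), abs_of_pos (by linarith)]
    linarith
  · by_contra! hcon
    have := hmax (a := t) ⟨⟨by linarith [ht₀.1, ht.1], by linarith [ht.2, ht₁.2]⟩, by
      simp only [mem_preimage, mem_Iic]; linarith⟩
    linarith [ht.1]
  · by_contra! hcon
    have := hmin (a := t) ⟨⟨by linarith [ht.1], by linarith [ht.2, ht₁.2]⟩, by
      simp only [mem_preimage, mem_Ici]; linarith⟩
    linarith [ht.2]

/-- The change of the truncation of a continuous function over `[0, L]` is already realized on a
subinterval in whose interior the function takes values strictly between the truncation levels. -/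
lemma clamp_crossing {h : ℝ → ℝ} {L a b : ℝ} (hL : 0 ≤ L) (hab : a ≤ b)
    (hc : ContinuousOn h (Icc 0 L)) :
    ∃ t₀ t₁, 0 ≤ t₀ ∧ t₀ ≤ t₁ ∧ t₁ ≤ L ∧
      |max a (min (h L) b) - max a (min (h 0) b)| ≤ |h t₁ - h t₀| ∧
      ∀ t ∈ Ioo t₀ t₁, a < h t ∧ h t < b := by
  have key : ∀ x : ℝ, max (-b) (min (-x) (-a)) = - max a (min x b) := by
    intro x
    grind
  rcases lt_trichotomy (max a (min (h 0) b)) (max a (min (h L) b)) with hlt | heq | hgt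
  · exact clamp_crossing_aux hL hc hlt
  · exact ⟨0, 0, le_rfl, le_rfl, hL, by simp [heq], by simp⟩
  · obtain ⟨t₀, t₁, h0, h1, h2, h3, h4⟩ := clamp_crossing_aux (h := fun t => - h t)
      (a := -b) (b := -a) hL hc.neg (by rw [key, key]; linarith)
    refine ⟨t₀, t₁, h0, h1, h2, ?_, fun t ht => ?_⟩
    · rw [key, key] at h3
      rw [abs_sub_comm, abs_sub_comm (h t₁)]
      convert h3 using 2 <;> ring
    · have := h4 t ht
      exact ⟨by linarith, by linarith⟩

/-- Truncating `w` at the levels `a < b` localizes its upper gradient to the set `{a < w < b}`,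
of which `S` is a version up to `N`. The term `ε * g` makes the inequality hold along the curves
on which `g` is not integrable, where `w` may jump; the value `∞` on `N` removes the curves that
spend positive time in `N`. -/
lemma IsUpperGradient.clamp {X : Type*} [MetricSpace X] [MeasurableSpace X] [BorelSpace X]
    {g : X → ℝ≥0∞} {w : X → ℝ} (h : IsUpperGradient g w) (hg : Measurable g) {a b : ℝ}
    (hab : a ≤ b) {S N : Set X} (hS : MeasurableSet S) (hN : MeasurableSet N)
    (hSN : ∀ x, x ∉ N → a < w x → w x < b → x ∈ S) {ε : ℝ≥0∞} (hε : ε ≠ 0) :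
    IsUpperGradient (fun x => N.indicator (fun _ => ⊤) x + (S.indicator g x + ε * g x))
      (fun x => max a (min (w x) b)) := by
  intro L γ hL hγ
  set G : X → ℝ≥0∞ := fun x => N.indicator (fun _ => ⊤) x + (S.indicator g x + ε * g x) with hG
  have hGm : Measurable G :=
    (measurable_const.indicator hN).add ((hg.indicator hS).add (hg.const_mul ε))
  by_cases htop : ∫⁻ t in Icc 0 L, G (γ t) = ⊤
  · rw [htop]; exact le_top
  have hγm : AEMeasurable γ (volume.restrict (Icc 0 L)) :=
    hγ.continuousOn.aemeasurable measurableSet_Icc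
  have hNae : ∀ᵐ t ∂(volume.restrict (Icc 0 L)), γ t ∉ N := by
    filter_upwards [ae_lt_top' (hGm.comp_aemeasurable hγm) htop] with t ht hmem
    simp [hG, hmem] at ht
  have hgfin : ∫⁻ t in Icc 0 L, g (γ t) ≠ ⊤ := by
    intro hcon
    apply htop
    rw [eq_top_iff]
    calc (⊤ : ℝ≥0∞) = ε * ∫⁻ t in Icc 0 L, g (γ t) := by rw [hcon, ENNReal.mul_top hε]
      _ = ∫⁻ t in Icc 0 L, ε * g (γ t) :=
        (lintegral_const_mul'' _ (hg.comp_aemeasurable hγm)).symm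
      _ ≤ ∫⁻ t in Icc 0 L, G (γ t) :=
        lintegral_mono fun t => le_add_left (le_add_left le_rfl)
  obtain ⟨t₀, t₁, h0, h1, h2, h3, h4⟩ :=
    clamp_crossing (a := a) (b := b) hL hab (h.continuousOn hγ hgfin)
  calc ENNReal.ofReal |max a (min (w (γ L)) b) - max a (min (w (γ 0)) b)|
      ≤ ENNReal.ofReal |w (γ t₁) - w (γ t₀)| := ENNReal.ofReal_le_ofReal h3
    _ ≤ ∫⁻ t in Icc t₀ t₁, g (γ t) := h.segment hγ h0 h1 h2
    _ = ∫⁻ t in Ioo t₀ t₁, g (γ t) := setLIntegral_congr Ioo_ae_eq_Icc.symm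
    _ ≤ ∫⁻ t in Ioo t₀ t₁, G (γ t) := by
      have hsub : Ioo t₀ t₁ ⊆ Icc 0 L :=
        fun t ht => ⟨h0.trans ht.1.le, ht.2.le.trans h2⟩
      refine lintegral_mono_ae ?_
      filter_upwards [ae_restrict_of_ae_restrict_of_subset hsub hNae,
        ae_restrict_mem measurableSet_Ioo] with t htN ht
      have hmem : γ t ∈ S := hSN _ htN (h4 t ht).1 (h4 t ht).2
      simp [hG, hmem, htN]
    _ ≤ ∫⁻ t in Icc 0 L, G (γ t) :=
      lintegral_mono_set fun t ht => ⟨h0.trans ht.1.le, ht.2.le.trans h2⟩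

/-! ### Averages over balls -/

lemma abs_setAverage_sub_le {X : Type*} [MeasurableSpace X] {μ : Measure X} {u : X → ℝ}
    {B B' : Set X} (hBB : B ⊆ B') (h0 : 0 < μ B) (h1 : μ B' < ⊤)
    (hu : IntegrableOn u B' μ) (m : ℝ) :
    |(⨍ y in B, u y ∂μ) - m| ≤ μ.real B' / μ.real B * ⨍ y in B', |u y - m| ∂μ := by
  have hBtop : μ B < ⊤ := (measure_mono hBB).trans_lt h1
  have hB : 0 < μ.real B := ENNReal.toReal_pos h0.ne' hBtop.ne
  have hB' : 0 < μ.real B' := ENNReal.toReal_pos (h0.trans_le (measure_mono hBB)).ne' h1.ne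
  have hint : IntegrableOn (fun y => u y - m) B' μ :=
    hu.sub (integrableOn_const h1.ne)
  have e1 : (⨍ y in B, u y ∂μ) - m = (μ.real B)⁻¹ * ∫ y in B, (u y - m) ∂μ := by
    rw [setAverage_eq, integral_sub (hu.mono_set hBB) (integrableOn_const hBtop.ne),
      setIntegral_const, smul_eq_mul, smul_eq_mul]
    field_simp
  rw [e1, setAverage_eq, abs_mul, abs_of_pos (inv_pos.2 hB), smul_eq_mul]
  have e2 : μ.real B' / μ.real B * ((μ.real B')⁻¹ * ∫ y in B', |u y - m| ∂μ)
      = (μ.real B)⁻¹ * ∫ y in B', |u y - m| ∂μ := by field_simp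
  rw [e2]
  refine mul_le_mul_of_nonneg_left ?_ (inv_pos.2 hB).le
  calc |∫ y in B, (u y - m) ∂μ| ≤ ∫ y in B, |u y - m| ∂μ := abs_integral_le_integral_abs
    _ ≤ ∫ y in B', |u y - m| ∂μ :=
      setIntegral_mono_set hint.abs (ae_of_all _ fun _ => abs_nonneg _) hBB.eventuallyLE

section Ahlfors

variable {X : Type*} [MetricSpace X] [MeasurableSpace X] {μ : Measure X} {s A : ℝ}

lemma real_ball_le (hA : 1 ≤ A)
    (hreg : ∀ (x : X) (r : ℝ), 0 < r →
      ENNReal.ofReal (r ^ s / A) ≤ μ (ball x r) ∧ μ (ball x r) ≤ ENNReal.ofReal (A * r ^ s))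
    (x : X) {r : ℝ} (hr : 0 < r) : μ.real (ball x r) ≤ A * r ^ s :=
  ENNReal.toReal_le_of_le_ofReal (by positivity) (hreg x r hr).2

lemma le_real_ball
    (hreg : ∀ (x : X) (r : ℝ), 0 < r →
      ENNReal.ofReal (r ^ s / A) ≤ μ (ball x r) ∧ μ (ball x r) ≤ ENNReal.ofReal (A * r ^ s))
    (x : X) {r : ℝ} (hr : 0 < r) : r ^ s / A ≤ μ.real (ball x r) := by
  have h := hreg x r hr
  exact (ENNReal.ofReal_le_iff_le_toReal (h.2.trans_lt ENNReal.ofReal_lt_top).ne).1 h.1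

/-- The ratio of the measures of two balls of comparable radii is bounded. -/
lemma ball_ratio_le (hA : 1 ≤ A) (hs : 0 < s)
    (hreg : ∀ (x : X) (r : ℝ), 0 < r →
      ENNReal.ofReal (r ^ s / A) ≤ μ (ball x r) ∧ μ (ball x r) ≤ ENNReal.ofReal (A * r ^ s))
    (x x' : X) {r r' : ℝ} (hr : 0 < r) (hr' : 0 < r') (h4 : r' ≤ 4 * r) :
    μ.real (ball x' r') / μ.real (ball x r) ≤ A ^ 2 * 4 ^ s := by
  have hA0 : 0 < A := by linarith
  have h1 := real_ball_le hA hreg x' hr'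
  have h2 := le_real_ball hreg x hr
  have h3 : r' ^ s ≤ 4 ^ s * r ^ s := by
    rw [← Real.mul_rpow (by norm_num) hr.le]
    exact Real.rpow_le_rpow hr'.le h4 hs.le
  have hrs : 0 < r ^ s := Real.rpow_pos_of_pos hr s
  rw [div_le_iff₀ (lt_of_lt_of_le (by positivity) h2)]
  calc μ.real (ball x' r') ≤ A * r' ^ s := h1
    _ ≤ A * (4 ^ s * r ^ s) := by gcongr
    _ = A ^ 2 * 4 ^ s * (r ^ s / A) := by field_simp
    _ ≤ _ := by gcongr

/-- The Poincaré inequality bounds the difference of the averages over two nested balls of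
comparable radii. -/
lemma average_step [ProperSpace X] {p C lam : ℝ}
    (hA : 1 ≤ A) (hs : 0 < s) (hp : 1 ≤ p) (hC : 0 < C) (hlam : 0 < lam)
    (hreg : ∀ (x : X) (r : ℝ), 0 < r →
      ENNReal.ofReal (r ^ s / A) ≤ μ (ball x r) ∧ μ (ball x r) ≤ ENNReal.ofReal (A * r ^ s))
    {u : X → ℝ} {G : X → ℝ≥0∞} (hu : LocallyIntegrable u μ)
    (hP : ∀ (x : X) (r : ℝ), 0 < r →
      ENNReal.ofReal (⨍ y in ball x r, |u y - ⨍ z in ball x r, u z ∂μ| ∂μ) ≤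
        ENNReal.ofReal (C * r) *
          ((∫⁻ y in ball x (lam * r), G y ^ p ∂μ) / μ (ball x (lam * r))) ^ (1 / p))
    (hG : ∫⁻ y, G y ^ p ∂μ ≠ ⊤)
    (x x' : X) {r r' : ℝ} (hr : 0 < r) (hr' : 0 < r') (h4 : r' ≤ 4 * r)
    (hsub : ball x r ⊆ ball x' r') :
    |(⨍ y in ball x r, u y ∂μ) - ⨍ y in ball x' r', u y ∂μ| ≤
      (A ^ 2 * 4 ^ s * (C * (A / lam ^ s) ^ (1 / p))) *
        (r' * ((∫⁻ y in ball x' (lam * r'), G y ^ p ∂μ).toReal / r' ^ s) ^ (1 / p)) := by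
  have hA0 : 0 < A := by linarith
  have hpos : ∀ (x : X) {r : ℝ}, 0 < r → 0 < μ (ball x r) := fun x r hr =>
    lt_of_lt_of_le (ENNReal.ofReal_pos.2 (by positivity)) (hreg x r hr).1
  have hfin : ∀ (x : X) {r : ℝ}, 0 < r → μ (ball x r) < ⊤ := fun x r hr =>
    (hreg x r hr).2.trans_lt ENNReal.ofReal_lt_top
  have hint : IntegrableOn u (ball x' r') μ :=
    (hu.integrableOn_isCompact (isCompact_closedBall x' r')).mono_set ball_subset_closedBall
  set J := ∫⁻ y in ball x' (lam * r'), G y ^ p ∂μ with hJ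
  have hJtop : J ≠ ⊤ := ((setLIntegral_le_lintegral _ _).trans_lt hG.lt_top).ne
  have hlr : 0 < lam * r' := by positivity
  set m := ⨍ y in ball x' r', u y ∂μ with hm
  have hosc : (⨍ y in ball x' r', |u y - m| ∂μ) ≤
      C * (A / lam ^ s) ^ (1 / p) * (r' * (J.toReal / r' ^ s) ^ (1 / p)) := by
    have h1 := hP x' r' hr'
    have hne : (J / μ (ball x' (lam * r'))) ^ (1 / p) ≠ ⊤ :=
      ENNReal.rpow_ne_top_of_nonneg (by positivity)
        (ENNReal.div_ne_top hJtop (hpos x' hlr).ne')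
    have h2 := (ENNReal.ofReal_le_iff_le_toReal
      (ENNReal.mul_ne_top ENNReal.ofReal_ne_top hne)).1 h1
    rw [ENNReal.toReal_mul, ENNReal.toReal_ofReal (by positivity), ← ENNReal.toReal_rpow,
      ENNReal.toReal_div] at h2
    refine h2.trans ?_
    have h3 : J.toReal / (μ (ball x' (lam * r'))).toReal ≤
        (A / lam ^ s) * (J.toReal / r' ^ s) := by
      have h4 : (lam * r') ^ s / A ≤ (μ (ball x' (lam * r'))).toReal := le_real_ball hreg x' hlr
      calc J.toReal / (μ (ball x' (lam * r'))).toReal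
          ≤ J.toReal / ((lam * r') ^ s / A) := by gcongr
        _ = _ := by
          rw [Real.mul_rpow hlam.le hr'.le]
          field_simp
    calc C * r' * (J.toReal / (μ (ball x' (lam * r'))).toReal) ^ (1 / p)
        ≤ C * r' * ((A / lam ^ s) * (J.toReal / r' ^ s)) ^ (1 / p) := by
          gcongr
      _ = _ := by
        rw [Real.mul_rpow (by positivity) (by positivity)]
        ring
  calc _ ≤ μ.real (ball x' r') / μ.real (ball x r) * ⨍ y in ball x' r', |u y - m| ∂μ :=
        abs_setAverage_sub_le hsub (hpos x hr) (hfin x' hr') hint m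
    _ ≤ (A ^ 2 * 4 ^ s) *
        (C * (A / lam ^ s) ^ (1 / p) * (r' * (J.toReal / r' ^ s) ^ (1 / p))) := by
      refine mul_le_mul (ball_ratio_le hA hs hreg x x' hr hr' h4) hosc ?_ (by positivity)
      rw [setAverage_eq]
      exact smul_nonneg (by positivity) (integral_nonneg fun _ => abs_nonneg _)
    _ = _ := by ring

/-- Lebesgue differentiation along the dyadic radii `R / 2 ^ n`, with open balls. -/
lemma ae_tendsto_average_ball [ProperSpace X] [BorelSpace X]
    (hA : 1 ≤ A) (hs : 0 < s)
    (hreg : ∀ (x : X) (r : ℝ), 0 < r →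
      ENNReal.ofReal (r ^ s / A) ≤ μ (ball x r) ∧ μ (ball x r) ≤ ENNReal.ofReal (A * r ^ s))
    {u : X → ℝ} (hu : LocallyIntegrable u μ) {R : ℝ} (hR : 0 < R) :
    ∀ᵐ x ∂μ, Tendsto (fun n : ℕ => ⨍ y in ball x (R / 2 ^ n), u y ∂μ) atTop (𝓝 (u x)) := by
  have hA0 : 0 < A := by linarith
  have hpos : ∀ (x : X) {r : ℝ}, 0 < r → 0 < μ (ball x r) := fun x r hr =>
    lt_of_lt_of_le (ENNReal.ofReal_pos.2 (by positivity)) (hreg x r hr).1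
  have hcb : ∀ (x : X) {r : ℝ}, 0 < r → μ (closedBall x r) < ⊤ := fun x r hr =>
    (measure_mono (closedBall_subset_ball (by linarith))).trans_lt
      ((hreg x (2 * r) (by positivity)).2.trans_lt ENNReal.ofReal_lt_top)
  have : IsUnifLocDoublingMeasure μ := by
    refine ⟨⟨(A ^ 2 * 4 ^ s).toNNReal, ?_⟩⟩
    filter_upwards [self_mem_nhdsWithin] with r hr x
    have hr : 0 < r := hr
    have h4 : 0 < 4 * r := by positivity
    have h := ball_ratio_le hA hs hreg x x hr h4 le_rfl
    have hb : 0 < μ.real (ball x r) :=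
      ENNReal.toReal_pos (hpos x hr).ne' ((hreg x r hr).2.trans_lt ENNReal.ofReal_lt_top).ne
    rw [div_le_iff₀ hb] at h
    calc μ (closedBall x (2 * r)) ≤ μ (ball x (4 * r)) :=
          measure_mono (closedBall_subset_ball (by linarith))
      _ = ENNReal.ofReal (μ.real (ball x (4 * r))) :=
        (ENNReal.ofReal_toReal ((hreg x _ h4).2.trans_lt ENNReal.ofReal_lt_top).ne).symm
      _ ≤ ENNReal.ofReal (A ^ 2 * 4 ^ s * μ.real (ball x r)) := ENNReal.ofReal_le_ofReal h
      _ = ENNReal.ofReal (A ^ 2 * 4 ^ s) * μ (ball x r) := by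
        rw [ENNReal.ofReal_mul (by positivity)]
        congr 1
        exact ENNReal.ofReal_toReal ((hreg x _ hr).2.trans_lt ENNReal.ofReal_lt_top).ne
      _ ≤ _ := by gcongr; exacts [le_rfl, ball_subset_closedBall]
  have : IsLocallyFiniteMeasure μ :=
    ⟨fun x => ⟨ball x 1, ball_mem_nhds x one_pos,
      (hreg x 1 one_pos).2.trans_lt ENNReal.ofReal_lt_top⟩⟩
  have hδ : Tendsto (fun n : ℕ => R / 2 ^ n) atTop (𝓝[>] 0) := by
    refine tendsto_nhdsWithin_iff.2 ⟨?_, Eventually.of_forall fun n => ?_⟩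
    · have := (tendsto_pow_atTop_nhds_zero_of_lt_one (r := (1 / 2 : ℝ)) (by norm_num)
        (by norm_num)).const_mul R
      simpa [div_eq_mul_inv] using this
    · exact mem_Ioi.2 (by positivity)
  filter_upwards [IsUnifLocDoublingMeasure.ae_tendsto_average_norm_sub (μ := μ) hu 1] with x hx
  have h1 := hx (fun _ : ℕ => x) (fun n : ℕ => R / 2 ^ n) hδ
    (Eventually.of_forall fun n => mem_closedBall_self (by positivity))
  rw [tendsto_iff_dist_tendsto_zero]
  refine squeeze_zero (fun _ => dist_nonneg) (fun n => ?_)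
    (by simpa using h1.const_mul (A ^ 2 * 4 ^ s))
  have hr : 0 < R / 2 ^ n := by positivity
  rw [Real.dist_eq]
  refine (abs_setAverage_sub_le (B' := closedBall x (R / 2 ^ n)) ball_subset_closedBall
    (hpos x hr) (hcb x hr) (hu.integrableOn_isCompact (isCompact_closedBall _ _)) (u x)).trans ?_
  refine mul_le_mul_of_nonneg_right ?_ ?_
  · refine le_trans ?_ (ball_ratio_le hA hs hreg x x hr (r' := 2 * (R / 2 ^ n))
      (by positivity) (by linarith))
    gcongr
    · exact ((hreg x _ (by positivity)).2.trans_lt ENNReal.ofReal_lt_top).ne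
    · exact closedBall_subset_ball (by linarith)
  · rw [setAverage_eq]
    exact smul_nonneg (by positivity) (integral_nonneg fun _ => abs_nonneg _)

end Ahlfors

/-- If `a x r` changes by at most `M * r' ^ (-α)` when a ball of radius `r` is replaced by
a larger one of comparable radius `r'`, then `a x r` has a limit as `r → ∞`, which does not depend
on `x`, and converges to it at the rate `r ^ (-α)`. -/
lemma exists_limit_of_step {X : Type*} [MetricSpace X] [Nonempty X] (a : X → ℝ → ℝ) {M α : ℝ}
    (hα : 0 < α) (hM : 0 ≤ M)
    (step : ∀ x x' r r', 0 < r → 0 < r' → r' ≤ 4 * r → ball x r ⊆ ball x' r' →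
      |a x r - a x' r'| ≤ M * r' ^ (-α)) :
    ∃ c, ∀ x r, 0 < r → |a x r - c| ≤ M / (1 - 2 ^ (-α)) * r ^ (-α) := by
  set ρ : ℝ := 2 ^ (-α) with hρ
  have hρ0 : 0 < ρ := by positivity
  have hρ1 : ρ < 1 := Real.rpow_lt_one_of_one_lt_of_neg (by norm_num) (by linarith)
  have hpow : ∀ (n : ℕ) (r : ℝ), 0 < r → (2 ^ n * r) ^ (-α) = r ^ (-α) * ρ ^ n := by
    intro n r hr
    rw [Real.mul_rpow (by positivity) hr.le, hρ, ← Real.rpow_natCast, ← Real.rpow_natCast,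
      ← Real.rpow_mul (by norm_num), ← Real.rpow_mul (by norm_num)]
    ring_nf
  have hgeo : ∀ x r, 0 < r → ∀ n : ℕ,
      dist (a x (2 ^ n * r)) (a x (2 ^ (n + 1) * r)) ≤ (M * r ^ (-α)) * ρ ^ n := by
    intro x r hr n
    have h2 : 0 < 2 ^ n * r := by positivity
    have hle : 2 ^ n * r ≤ 2 ^ (n + 1) * r := by rw [pow_succ]; nlinarith
    refine (step x x (2 ^ n * r) (2 ^ (n + 1) * r) h2 (by positivity)
      (by rw [pow_succ]; nlinarith) (ball_subset_ball hle)).trans ?_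
    rw [mul_assoc, ← hpow n r hr]
    refine mul_le_mul_of_nonneg_left ?_ hM
    exact Real.rpow_le_rpow_of_nonpos h2 hle (by linarith)
  obtain ⟨x₀⟩ := ‹Nonempty X›
  obtain ⟨c, hc⟩ := cauchySeq_tendsto_of_complete
    (cauchySeq_of_le_geometric ρ _ hρ1 (hgeo x₀ 1 one_pos))
  have hc' := dist_le_of_le_geometric_of_tendsto ρ _ hρ1 (hgeo x₀ 1 one_pos) hc
  refine ⟨c, fun x r hr => ?_⟩
  set E : ℝ := M / (1 - ρ) with hE
  have hE0 : 0 ≤ E := div_nonneg hM (by linarith)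
  -- a ball about `x` of large radius sits inside a comparable dyadic ball about `x₀`
  have hlarge : ∀ t, 1 ≤ t → dist x x₀ ≤ t → |a x t - c| ≤ (M + E) * t ^ (-α) := by
    intro t h1t hdt
    obtain ⟨n, hn1, hn2⟩ := exists_nat_pow_near (x := 2 * t) (y := 2) (by linarith) (by norm_num)
    have hmono : ((2 : ℝ) ^ (n + 1)) ^ (-α) ≤ t ^ (-α) :=
      Real.rpow_le_rpow_of_nonpos (by linarith) (by linarith) (by linarith)
    have e1 := step x x₀ t (2 ^ (n + 1)) (by linarith) (by positivity)
      (by rw [pow_succ]; linarith) (ball_subset_ball' (by linarith))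
    have e2 := hc' (n + 1)
    rw [Real.dist_eq] at e2
    have e3 := hpow (n + 1) 1 one_pos
    simp only [mul_one, Real.one_rpow, one_mul] at e2 e3
    rw [← e3, mul_div_right_comm, ← hE] at e2
    calc |a x t - c| ≤ |a x t - a x₀ (2 ^ (n + 1))| + |a x₀ (2 ^ (n + 1)) - c| :=
          abs_sub_le _ _ _
      _ ≤ M * (2 ^ (n + 1)) ^ (-α) + E * (2 ^ (n + 1)) ^ (-α) := add_le_add e1 e2
      _ = (M + E) * (2 ^ (n + 1)) ^ (-α) := by ring
      _ ≤ _ := by gcongr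
  have htop : Tendsto (fun n : ℕ => (2 : ℝ) ^ n * r) atTop atTop :=
    (tendsto_pow_atTop_atTop_of_one_lt (by norm_num)).atTop_mul_const hr
  have hlim : Tendsto (fun n : ℕ => a x (2 ^ n * r)) atTop (𝓝 c) := by
    rw [tendsto_iff_dist_tendsto_zero]
    have hz : Tendsto (fun n : ℕ => (M + E) * (2 ^ n * r) ^ (-α)) atTop (𝓝 0) := by
      simpa using ((tendsto_rpow_neg_atTop hα).comp htop).const_mul (M + E)
    refine squeeze_zero' (Eventually.of_forall fun _ => dist_nonneg) ?_ hz
    filter_upwards [htop.eventually_ge_atTop 1, htop.eventually_ge_atTop (dist x x₀)] with n h1 h2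
    exact hlarge _ h1 h2
  have := dist_le_of_le_geometric_of_tendsto₀ ρ _ hρ1 (hgeo x r hr) hlim
  simp only [pow_zero, one_mul] at this
  rw [Real.dist_eq] at this
  calc _ ≤ _ := this
    _ = _ := by rw [hE]; ring

/-! ### The weak-type Sobolev inequality -/

/-- A Vitali covering argument: `E` has measure at most a multiple of `∫ F` if every point of `E`
is the centre of a ball, of bounded radius, in which `F` has mass at least a multiple of the
measure of the ball. -/
lemma measure_le_of_ball_cover {X : Type*} [MetricSpace X] [MeasurableSpace X] [BorelSpace X]
    [ProperSpace X] {μ : Measure X} {s A lam Q R : ℝ}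
    (hA : 1 ≤ A) (hlam : 0 < lam)
    (hreg : ∀ (x : X) (r : ℝ), 0 < r →
      ENNReal.ofReal (r ^ s / A) ≤ μ (ball x r) ∧ μ (ball x r) ≤ ENNReal.ofReal (A * r ^ s))
    (F : X → ℝ≥0∞) (E : Set X) (rad : X → ℝ)
    (hrad : ∀ x ∈ E, 0 < rad x ∧ rad x ≤ R ∧
      ENNReal.ofReal (rad x ^ s) ≤ ENNReal.ofReal Q * ∫⁻ y in ball x (lam * rad x), F y ∂μ) :
    μ E ≤ ENNReal.ofReal (A * (6 * lam) ^ s * Q) * ∫⁻ y, F y ∂μ := by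
  obtain ⟨v, hvE, hdisj, hcov⟩ := Vitali.exists_disjoint_subfamily_covering_enlargement_closedBall
    E (fun x => x) (fun x => lam * rad x) (lam * R)
    (fun x hx => mul_le_mul_of_nonneg_left (hrad x hx).2.1 hlam.le) 5 (by norm_num)
  have hposr : ∀ x ∈ v, 0 < lam * rad x := fun x hx => mul_pos hlam (hrad x (hvE hx)).1
  have hcount : v.Countable := hdisj.countable_of_nonempty_interior fun x hx =>
    ⟨x, ball_subset_interior_closedBall (mem_ball_self (hposr x hx))⟩
  have : Countable v := hcount.to_subtype
  have hsub : E ⊆ ⋃ b : v, ball (b : X) (6 * lam * rad b) := by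
    intro x hx
    obtain ⟨b, hb, hxb⟩ := hcov x hx
    refine mem_iUnion.2 ⟨⟨b, hb⟩, ?_⟩
    have h1 := hxb (mem_closedBall_self (mul_pos hlam (hrad x hx).1).le)
    exact closedBall_subset_ball (by linarith [hposr b hb]) h1
  calc μ E ≤ ∑' b : v, μ (ball (b : X) (6 * lam * rad b)) :=
        (measure_mono hsub).trans (measure_iUnion_le _)
    _ ≤ ∑' b : v, ENNReal.ofReal (A * (6 * lam) ^ s * Q) *
          ∫⁻ y in ball (b : X) (lam * rad b), F y ∂μ := by
      refine ENNReal.tsum_le_tsum fun b => ?_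
      obtain ⟨h1, -, h3⟩ := hrad b (hvE b.2)
      calc μ (ball (b : X) (6 * lam * rad b)) ≤ ENNReal.ofReal (A * (6 * lam * rad b) ^ s) :=
            (hreg b _ (by positivity)).2
        _ = ENNReal.ofReal (A * (6 * lam) ^ s) * ENNReal.ofReal (rad b ^ s) := by
          rw [← ENNReal.ofReal_mul (by positivity), Real.mul_rpow (by positivity) h1.le, mul_assoc]
        _ ≤ ENNReal.ofReal (A * (6 * lam) ^ s) *
            (ENNReal.ofReal Q * ∫⁻ y in ball (b : X) (lam * rad b), F y ∂μ) := by gcongr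
        _ = _ := by rw [← mul_assoc, ← ENNReal.ofReal_mul (by positivity)]
    _ = ENNReal.ofReal (A * (6 * lam) ^ s * Q) *
          ∑' b : v, ∫⁻ y in ball (b : X) (lam * rad b), F y ∂μ := ENNReal.tsum_mul_left
    _ = ENNReal.ofReal (A * (6 * lam) ^ s * Q) *
          ∫⁻ y in ⋃ b : v, ball (b : X) (lam * rad b), F y ∂μ := by
      rw [lintegral_iUnion (fun _ => measurableSet_ball)]
      intro b b' hbb
      exact (hdisj b.2 b'.2 (fun h => hbb (Subtype.ext h))).mono ball_subset_closedBall
        ball_subset_closedBall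
    _ ≤ _ := mul_le_mul' le_rfl (setLIntegral_le_lintegral _ _)

/-- The weak-type Sobolev inequality, with a constant `K` independent of the pair `(u, G)`. -/
lemma exists_weak_type {X : Type*} [MetricSpace X] [MeasurableSpace X] [BorelSpace X]
    [ProperSpace X] [Nonempty X] {μ : Measure X} {s p A C lam : ℝ}
    (hA : 1 ≤ A) (hp : 1 ≤ p) (hps : p < s) (hC : 0 < C) (hlam : 0 < lam)
    (hreg : ∀ (x : X) (r : ℝ), 0 < r →
      ENNReal.ofReal (r ^ s / A) ≤ μ (ball x r) ∧ μ (ball x r) ≤ ENNReal.ofReal (A * r ^ s)) :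
    ∃ K : ℝ, 0 < K ∧ ∀ (u : X → ℝ) (G : X → ℝ≥0∞) (I : ℝ), LocallyIntegrable u μ →
      (∀ (x : X) (r : ℝ), 0 < r →
        ENNReal.ofReal (⨍ y in ball x r, |u y - ⨍ z in ball x r, u z ∂μ| ∂μ) ≤
          ENNReal.ofReal (C * r) *
            ((∫⁻ y in ball x (lam * r), G y ^ p ∂μ) / μ (ball x (lam * r))) ^ (1 / p)) →
      0 < I → ∫⁻ y, G y ^ p ∂μ ≤ ENNReal.ofReal I →
      ∃ c : ℝ, ∀ t : ℝ, 0 < t →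
        μ {x | t < |u x - c|} ≤
          ENNReal.ofReal (K * I ^ (s / (s - p)) / t ^ (p * s / (s - p))) := by
  have hs : 0 < s := by linarith
  have hp0 : 0 < p := by linarith
  have hA0 : 0 < A := by linarith
  set D : ℝ := A ^ 2 * 4 ^ s * (C * (A / lam ^ s) ^ (1 / p)) with hD
  have hD0 : 0 < D := by positivity
  set α : ℝ := s / p - 1 with hα
  have hα0 : 0 < α := by rw [hα, sub_pos, lt_div_iff₀ hp0]; linarith
  have hρ1 : (2 : ℝ) ^ (-α) < 1 := Real.rpow_lt_one_of_one_lt_of_neg (by norm_num) (by linarith)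
  set E₁ : ℝ := D / (1 - 2 ^ (-α)) with hE₁
  have hE₁0 : 0 < E₁ := div_pos hD0 (by linarith)
  refine ⟨A * (6 * lam) ^ s * (4 * D) ^ p * (2 * E₁) ^ (p / α), by positivity, ?_⟩
  intro u G I hu hP hI hGI
  have hG : ∫⁻ y, G y ^ p ∂μ ≠ ⊤ := (hGI.trans_lt ENNReal.ofReal_lt_top).ne
  have hstep := fun x x' r r' => average_step (μ := μ) (r := r) (r' := r')
    hA hs hp hC hlam hreg hu hP hG x x'
  rw [← hD] at hstep
  have hJI : ∀ S : Set X, (∫⁻ y in S, G y ^ p ∂μ).toReal ≤ I := fun S =>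
    ENNReal.toReal_le_of_le_ofReal hI.le ((setLIntegral_le_lintegral _ _).trans hGI)
  obtain ⟨c, hc⟩ := exists_limit_of_step (fun (x : X) r => ⨍ y in ball x r, u y ∂μ)
    (M := D * I ^ (1 / p)) hα0 (by positivity) (by
      intro x x' r r' hr hr' h4 hsub
      refine (hstep x x' r r' hr hr' h4 hsub).trans ?_
      calc D * (r' * ((∫⁻ y in ball x' (lam * r'), G y ^ p ∂μ).toReal / r' ^ s) ^ (1 / p))
          ≤ D * (r' * (I / r' ^ s) ^ (1 / p)) := by gcongr; exact hJI _
        _ = D * I ^ (1 / p) * (r' ^ (1 : ℝ) / r' ^ (s / p)) := by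
          rw [Real.div_rpow hI.le (by positivity), ← Real.rpow_mul hr'.le, Real.rpow_one,
            mul_one_div]
          ring
        _ = D * I ^ (1 / p) * r' ^ (-α) := by
          rw [← Real.rpow_sub hr', hα, neg_sub])
  refine ⟨c, fun t ht => ?_⟩
  -- the radius at which the averages of `u` are within `t / 2` of `c`
  set R : ℝ := (2 * E₁ * I ^ (1 / p) / t) ^ (1 / α) with hR
  have hR0 : 0 < R := by positivity
  have hRα : E₁ * I ^ (1 / p) * R ^ (-α) = t / 2 := by
    have : R ^ (-α) = (2 * E₁ * I ^ (1 / p) / t)⁻¹ := by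
      rw [hR, ← Real.rpow_mul (by positivity), ← Real.rpow_neg_one]
      congr 1
      field_simp
    rw [this]
    field_simp
  have hcR : ∀ x, |(⨍ y in ball x R, u y ∂μ) - c| ≤ t / 2 := fun x => by
    refine (hc x R hR0).trans (le_of_eq ?_)
    rw [← hRα, hE₁]
    ring
  set good : Set X := {x | Tendsto (fun n : ℕ => ⨍ y in ball x (R / 2 ^ n), u y ∂μ) atTop
    (𝓝 (u x))} with hgood
  have hae : ∀ᵐ x ∂μ, x ∈ good := ae_tendsto_average_ball hA hs hreg hu hR0
  set Q : ℝ := (4 * R * D / t) ^ p with hQ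
  have hsel : ∀ x ∈ {x | t < |u x - c|} ∩ good, ∃ r : ℝ, 0 < r ∧ r ≤ R ∧
      ENNReal.ofReal (r ^ s) ≤
        ENNReal.ofReal Q * ∫⁻ y in ball x (lam * r), G y ^ p ∂μ := by
    rintro x ⟨hxt, hxg⟩
    -- otherwise the dyadic averages, which start within `t / 2` of `c`, would drift by at most
    -- `t / 2` on their way to `u x`
    have hex : ∃ k : ℕ, t / 2 / 2 / 2 ^ k <
        dist (⨍ y in ball x (R / 2 ^ k), u y ∂μ) (⨍ y in ball x (R / 2 ^ (k + 1)), u y ∂μ) := by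
      by_contra! hcon
      have h1 := dist_le_of_le_geometric_two_of_tendsto₀ hcon hxg
      simp only [pow_zero, div_one] at h1
      rw [Real.dist_eq, abs_sub_comm] at h1
      have h2 := abs_sub_le (u x) (⨍ y in ball x R, u y ∂μ) c
      have h3 : t < |u x - c| := hxt
      linarith [hcR x]
    obtain ⟨k, hk⟩ := hex
    set r : ℝ := R / 2 ^ k with hr
    have hr0 : 0 < r := by positivity
    have hr2 : R / 2 ^ (k + 1) = r / 2 := by rw [hr, pow_succ]; field_simp
    refine ⟨r, hr0, div_le_self hR0.le (one_le_pow₀ (by norm_num)), ?_⟩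
    rw [hr2, dist_comm, Real.dist_eq] at hk
    have h1 := hk.trans_le (hstep x x (r / 2) r (by positivity) hr0 (by linarith)
      (ball_subset_ball (by linarith)))
    set J := ∫⁻ y in ball x (lam * r), G y ^ p ∂μ with hJ
    have hJtop : J ≠ ⊤ := ((setLIntegral_le_lintegral _ _).trans_lt hG.lt_top).ne
    have h2 : t / (4 * R * D) < (J.toReal / r ^ s) ^ (1 / p) := by
      have e : t / 2 / 2 / 2 ^ k = D * (r * (t / (4 * R * D))) := by
        rw [hr]; field_simp; norm_num
      rw [e] at h1
      exact lt_of_mul_lt_mul_left (lt_of_mul_lt_mul_left h1 hD0.le) hr0.le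
    have h3 : (t / (4 * R * D)) ^ p ≤ J.toReal / r ^ s := by
      have := Real.rpow_le_rpow (by positivity) h2.le hp0.le
      rwa [← Real.rpow_mul (by positivity), one_div_mul_cancel hp0.ne', Real.rpow_one] at this
    have h4 : r ^ s ≤ Q * J.toReal := by
      rw [le_div_iff₀ (by positivity)] at h3
      have hQ' : Q * (t / (4 * R * D)) ^ p = 1 := by
        rw [hQ, ← Real.mul_rpow (by positivity) (by positivity)]
        have : 4 * R * D / t * (t / (4 * R * D)) = 1 := by field_simp
        rw [this, Real.one_rpow]
      calc r ^ s = Q * ((t / (4 * R * D)) ^ p * r ^ s) := by rw [← mul_assoc, hQ', one_mul]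
        _ ≤ _ := by gcongr
    calc ENNReal.ofReal (r ^ s) ≤ ENNReal.ofReal (Q * J.toReal) := ENNReal.ofReal_le_ofReal h4
      _ = _ := by rw [ENNReal.ofReal_mul (by positivity), ENNReal.ofReal_toReal hJtop]
  choose! rad hrad using hsel
  have hcover := measure_le_of_ball_cover hA hlam hreg
    (fun y => G y ^ p) _ rad hrad
  calc μ {x | t < |u x - c|} = μ ({x | t < |u x - c|} ∩ good) :=
        by rw [inter_comm, Measure.measure_inter_eq_of_ae hae]
    _ ≤ ENNReal.ofReal (A * (6 * lam) ^ s * Q) * ENNReal.ofReal I := hcover.trans (by gcongr)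
    _ = ENNReal.ofReal (A * (6 * lam) ^ s * Q * I) := (ENNReal.ofReal_mul (by positivity)).symm
    _ = _ := by
      congr 1
      have hsp : 0 < s - p := by linarith
      have hα' : p / α = p * p / (s - p) := by rw [hα]; field_simp
      have hRp : R ^ p = (2 * E₁) ^ (p / α) * I ^ (p / (s - p)) / t ^ (p / α) := by
        rw [hR, ← Real.rpow_mul (by positivity), Real.div_rpow (by positivity) ht.le,
          Real.mul_rpow (by positivity) (by positivity), ← Real.rpow_mul hI.le]
        have e1 : 1 / α * p = p / α := by ring
        have e2 : 1 / p * (p / α) = p / (s - p) := by rw [hα']; field_simp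
        rw [e1, e2]
      have hQe : Q = (4 * D) ^ p * R ^ p / t ^ p := by
        rw [hQ, Real.div_rpow (by positivity) ht.le, ← Real.mul_rpow (by positivity) hR0.le]
        ring_nf
      have hIe : I ^ (s / (s - p)) = I ^ (p / (s - p)) * I := by
        conv_rhs => rw [← Real.rpow_one I, ← Real.rpow_mul hI.le, ← Real.rpow_add hI]
        congr 1
        field_simp
        ring
      have hte : t ^ (p * s / (s - p)) = t ^ (p / α) * t ^ p := by
        rw [← Real.rpow_add ht, hα']
        congr 1
        field_simp
        ring
      rw [hQe, hRp, hIe, hte]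
      field_simp

/-! ### Summation over the dyadic level sets -/

lemma IsUpperGradient.abs_sub_const {X : Type*} [MetricSpace X] {g : X → ℝ≥0∞} {u : X → ℝ}
    (h : IsUpperGradient g u) (c : ℝ) : IsUpperGradient g (fun x => |u x - c|) := by
  intro L γ hL hγ
  refine (ENNReal.ofReal_le_ofReal ?_).trans (h L γ hL hγ)
  refine (abs_abs_sub_abs_le_abs_sub _ _).trans (le_of_eq ?_)
  congr 1
  ring

/-- The energy of the upper gradient of a truncation. -/
lemma lintegral_truncated_le {X : Type*} [MeasurableSpace X] {μ : Measure X} {g : X → ℝ≥0∞}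
    (hg : Measurable g) {p : ℝ} (hp : 1 ≤ p) (hgp : ∫⁻ x, g x ^ p ∂μ ≠ ⊤) {S N : Set X}
    (hS : MeasurableSet S) (hN0 : μ N = 0) {e : ℝ} (he : 0 ≤ e) (he1 : e ≤ 1) :
    ∫⁻ x, (N.indicator (fun _ => ⊤) x + (S.indicator g x + ENNReal.ofReal e * g x)) ^ p ∂μ ≤
      ENNReal.ofReal (2 ^ p * (∫⁻ x in S, g x ^ p ∂μ).toReal + e * (∫⁻ x, g x ^ p ∂μ).toReal) := by
  have hp0 : 0 < p := by linarith
  have hSfin : ∫⁻ x in S, g x ^ p ∂μ ≠ ⊤ :=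
    ((setLIntegral_le_lintegral _ _).trans_lt hgp.lt_top).ne
  calc ∫⁻ x, (N.indicator (fun _ => ⊤) x + (S.indicator g x + ENNReal.ofReal e * g x)) ^ p ∂μ
      ≤ ∫⁻ x, (S.indicator (fun x => ENNReal.ofReal (2 ^ p) * g x ^ p) x +
          ENNReal.ofReal e * g x ^ p) ∂μ := by
        refine lintegral_mono_ae ?_
        filter_upwards [measure_eq_zero_iff_ae_notMem.1 hN0] with x hxN
        rw [indicator_of_notMem hxN, zero_add]
        by_cases hx : x ∈ S
        · rw [indicator_of_mem hx, indicator_of_mem hx]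
          refine le_add_right ?_
          calc (g x + ENNReal.ofReal e * g x) ^ p ≤ (ENNReal.ofReal 2 * g x) ^ p := by
                gcongr
                calc g x + ENNReal.ofReal e * g x ≤ g x + 1 * g x := by
                      gcongr
                      exact ENNReal.ofReal_le_one.2 he1
                  _ = ENNReal.ofReal 2 * g x := by rw [one_mul, ENNReal.ofReal_ofNat, two_mul]
            _ = _ := by
              rw [ENNReal.mul_rpow_of_nonneg _ _ hp0.le,
                ENNReal.ofReal_rpow_of_nonneg (by norm_num) hp0.le]
        · rw [indicator_of_notMem hx, indicator_of_notMem hx, zero_add, zero_add,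
            ENNReal.mul_rpow_of_nonneg _ _ hp0.le, ENNReal.ofReal_rpow_of_nonneg he hp0.le]
          gcongr
          exact Real.rpow_le_self_of_le_one he he1 hp
    _ = ENNReal.ofReal (2 ^ p) * ∫⁻ x in S, g x ^ p ∂μ +
          ENNReal.ofReal e * ∫⁻ x, g x ^ p ∂μ := by
      rw [lintegral_add_right _ ((hg.pow_const p).const_mul _), lintegral_indicator hS,
        lintegral_const_mul _ (hg.pow_const p), lintegral_const_mul _ (hg.pow_const p)]
    _ = _ := by
      rw [ENNReal.ofReal_add (by positivity) (by positivity), ENNReal.ofReal_mul (by positivity),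
        ENNReal.ofReal_mul he, ENNReal.ofReal_toReal hSfin, ENNReal.ofReal_toReal hgp]

lemma summable_half_pow_natAbs : Summable fun k : ℤ => (1 / 2 : ℝ) ^ k.natAbs := by
  refine Summable.of_nat_of_neg ?_ ?_ <;> simpa using summable_geometric_two

lemma summable_rpow_of_one_le {ι : Type*} {a : ι → ℝ} (ha : ∀ i, 0 < a i) (hs : Summable a)
    {β : ℝ} (hβ : 1 ≤ β) : Summable fun i => a i ^ β := by
  refine Summable.of_nonneg_of_le (fun i => (Real.rpow_pos_of_pos (ha i) _).le) (fun i => ?_)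
    (hs.mul_right ((∑' i, a i) ^ (β - 1)))
  calc a i ^ β = a i * a i ^ (β - 1) := by
        conv_rhs => rw [← Real.rpow_one_add' (ha i).le (by linarith)]
        congr 1
        ring
    _ ≤ _ := by
      gcongr
      · exact (ha i).le
      · exact (ha i).le
      · exact hs.le_tsum i fun j _ => (ha j).le

lemma lintegral_rpow_le_tsum_dyadic {X : Type*} [MeasurableSpace X] {μ : Measure X} {w : X → ℝ}
    (hw : Measurable w) {q : ℝ} (hq : 0 < q) :
    ∫⁻ x, ENNReal.ofReal (w x) ^ q ∂μ ≤
      ∑' k : ℤ, ENNReal.ofReal (((2 : ℝ) ^ (k + 1)) ^ q) *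
        μ {x | (2 : ℝ) ^ k < w x ∧ w x ≤ 2 ^ (k + 1)} := by
  have hm : ∀ k : ℤ, MeasurableSet {x | (2 : ℝ) ^ k < w x ∧ w x ≤ 2 ^ (k + 1)} := fun k =>
    (measurableSet_lt measurable_const hw).inter (measurableSet_le hw measurable_const)
  calc ∫⁻ x, ENNReal.ofReal (w x) ^ q ∂μ
      ≤ ∫⁻ x, ∑' k : ℤ, {x | (2 : ℝ) ^ k < w x ∧ w x ≤ 2 ^ (k + 1)}.indicator
          (fun _ => ENNReal.ofReal (((2 : ℝ) ^ (k + 1)) ^ q)) x ∂μ := by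
        refine lintegral_mono fun x => ?_
        rcases le_or_gt (w x) 0 with h0 | h0
        · rw [ENNReal.ofReal_of_nonpos h0, ENNReal.zero_rpow_of_pos hq]
          exact zero_le
        · obtain ⟨k, hk1, hk2⟩ := exists_mem_Ioc_zpow h0 (one_lt_two)
          refine le_trans ?_ (ENNReal.le_tsum k)
          rw [indicator_of_mem
              (show x ∈ {x | (2 : ℝ) ^ k < w x ∧ w x ≤ 2 ^ (k + 1)} from ⟨hk1, hk2⟩),
            ENNReal.ofReal_rpow_of_nonneg h0.le hq.le]
          gcongr
    _ = _ := by
      rw [lintegral_tsum fun k => (measurable_const.indicator (hm k)).aemeasurable]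
      simp only [lintegral_indicator_const (hm _)]

/-! ### The Sobolev embedding -/

/-- under the standing assumptions, if `μ` is Ahlfors `s`-regular, `(X,d,μ)` is
of globally `p`-controlled geometry with `1 ≤ p < s`, and `q = ps/(s-p)`, then every
`f ∈ D^{1,p}(X)` satisfies `∫ |f - c|^q dμ < ∞` for some constant `c ∈ ℝ`. -/
theorem statement10 {X : Type*} [MetricSpace X] [MeasurableSpace X] [BorelSpace X]
    [ProperSpace X] [ConnectedSpace X]
    (μ : Measure X) (hXinf : μ Set.univ = ⊤)
    (hball : ∀ (x : X) (r : ℝ), 0 < r → 0 < μ (ball x r) ∧ μ (ball x r) < ⊤)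
    (s p : ℝ) (hp : 1 ≤ p) (hps : p < s)
    (hreg : AhlforsRegular s μ)
    (hgeom : GloballyControlledGeometry p μ)
    (f : X → ℝ) (hf : LocallyIntegrable f μ)
    (g : X → ℝ≥0∞) (hg : Measurable g) (hug : IsUpperGradient g f)
    (hgp : (∫⁻ x, g x ^ p ∂μ) < ⊤) :
    ∃ c : ℝ, (∫⁻ x, ENNReal.ofReal |f x - c| ^ (p * s / (s - p)) ∂μ) < ⊤ := by
  have hp0 : 0 < p := by linarith
  have hs : 0 < s := by linarith
  have hsp : 0 < s - p := by linarith
  obtain ⟨A, hA, hreg⟩ := hreg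
  obtain ⟨-, C, lam, -, hC, hlam, -, hPoin⟩ := hgeom
  obtain ⟨K, hK, hweak⟩ := exists_weak_type hA hp hps hC hlam hreg
  have : IsLocallyFiniteMeasure μ :=
    ⟨fun x => ⟨ball x 1, ball_mem_nhds x one_pos, (hball x 1 one_pos).2⟩⟩
  set q : ℝ := p * s / (s - p) with hq
  have hq0 : 0 < q := by positivity
  set β : ℝ := s / (s - p) with hβ
  have hβ1 : 1 ≤ β := by rw [hβ, le_div_iff₀ hsp]; linarith
  set I₀ : ℝ := (∫⁻ x, g x ^ p ∂μ).toReal + 1 with hI₀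
  have hI₀0 : 0 < I₀ := by positivity
  obtain ⟨c, hc⟩ := hweak f g I₀ hf (hPoin f g hf hg hug) hI₀0 (by
    conv_lhs => rw [← ENNReal.ofReal_toReal hgp.ne]
    exact ENNReal.ofReal_le_ofReal (by linarith))
  refine ⟨c, ?_⟩
  -- a Borel representative of `|f - c|`, and a Borel null set off which it equals `|f - c|`
  obtain ⟨h, hh, hfh⟩ : ∃ h : X → ℝ, Measurable h ∧ f =ᵐ[μ] h :=
    ⟨_, hf.aestronglyMeasurable.stronglyMeasurable_mk.measurable,
      hf.aestronglyMeasurable.ae_eq_mk⟩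
  obtain ⟨N, hfN, hN, hN0⟩ := exists_measurable_superset_of_null (ae_iff.1 hfh)
  have hfhN : ∀ x, x ∉ N → f x = h x := fun x hx => by
    by_contra hne
    exact hx (hfN hne)
  set w : X → ℝ := fun x => |f x - c| with hw
  set w' : X → ℝ := fun x => |h x - c| with hw'
  have hw'm : Measurable w' := (hh.sub_const c).abs
  have hww' : w =ᵐ[μ] w' := by
    filter_upwards [hfh] with x hx
    simp [hw, hw', hx]
  have hwug : IsUpperGradient g w := hug.abs_sub_const c
  set S : ℤ → Set X := fun k => {x | (2 : ℝ) ^ k < w' x ∧ w' x ≤ 2 ^ (k + 1)} with hSdef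
  have hSm : ∀ k, MeasurableSet (S k) := fun k =>
    (measurableSet_lt measurable_const hw'm).inter (measurableSet_le hw'm measurable_const)
  have hSdisj : Pairwise (Function.onFun Disjoint S) := by
    intro k l hkl
    refine disjoint_left.2 fun x hx hx' => hkl ?_
    have h1 : k < l + 1 := (zpow_lt_zpow_iff_right₀ (one_lt_two (α := ℝ))).1 (hx.1.trans_le hx'.2)
    have h2 : l < k + 1 := (zpow_lt_zpow_iff_right₀ (one_lt_two (α := ℝ))).1 (hx'.1.trans_le hx.2)
    omega
  -- the energy on the `k`-th level set, with a summable error term absorbing the `ε`-perturbation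
  -- of the upper gradient of the `k`-th truncation
  set I : ℤ → ℝ := fun k =>
    2 ^ p * (∫⁻ x in S k, g x ^ p ∂μ).toReal + (1 / 2) ^ k.natAbs * I₀ with hI
  have hIpos : ∀ k, 0 < I k := fun k => by positivity
  have hIsum : Summable I := by
    refine Summable.add (Summable.mul_left _ (ENNReal.summable_toReal ?_))
      (summable_half_pow_natAbs.mul_right _)
    rw [← lintegral_iUnion hSm hSdisj]
    exact ((setLIntegral_le_lintegral _ _).trans_lt hgp).ne
  have hlevel : ∀ k : ℤ, μ (S (k + 1)) ≤
      ENNReal.ofReal (K * I k ^ β / ((2 : ℝ) ^ (k - 1)) ^ q) := by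
    intro k
    have h2k : (0 : ℝ) < 2 ^ k := by positivity
    have h2k1 : (2 : ℝ) ^ (k + 1) = 2 * 2 ^ k := by rw [zpow_add_one₀ (by norm_num)]; ring
    have h2k2 : (2 : ℝ) ^ (k - 1) = 2 ^ k / 2 := by rw [zpow_sub_one₀ (by norm_num)]; ring
    set e : ℝ := (1 / 2) ^ k.natAbs with he
    have he0 : 0 < e := by positivity
    have he1 : e ≤ 1 := pow_le_one₀ (by norm_num) (by norm_num)
    set v : X → ℝ := fun x => max ((2 : ℝ) ^ k) (min (w x) (2 ^ (k + 1))) with hv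
    set G : X → ℝ≥0∞ := fun x =>
      N.indicator (fun _ => ⊤) x + ((S k).indicator g x + ENNReal.ofReal e * g x) with hG
    have hGm : Measurable G :=
      (measurable_const.indicator hN).add ((hg.indicator (hSm k)).add (hg.const_mul _))
    have hvG : IsUpperGradient G v := by
      refine hwug.clamp hg (by linarith) (hSm k) hN ?_ (by simpa using he0)
      intro x hx h1 h2
      have e1 : w' x = w x := by simp only [hw, hw', hfhN x hx]
      exact ⟨e1 ▸ h1, e1 ▸ h2.le⟩
    have hwm : AEStronglyMeasurable w μ := ⟨w', hw'm.stronglyMeasurable, hww'⟩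
    have hvint : LocallyIntegrable v μ := by
      refine (locallyIntegrable_const ((2 : ℝ) ^ (k + 1))).mono
        (aestronglyMeasurable_const.sup (hwm.inf aestronglyMeasurable_const))
        (ae_of_all _ fun x => ?_)
      rw [Real.norm_eq_abs, Real.norm_eq_abs, abs_of_pos (lt_max_of_lt_left h2k),
        abs_of_pos (by positivity)]
      exact max_le (by linarith) (min_le_right _ _)
    obtain ⟨b, hb⟩ := hweak v G (I k) hvint (hPoin v G hvint hGm hvG) (hIpos k) (by
      refine (lintegral_truncated_le hg hp hgp.ne (hSm k) hN0 he0.le he1).trans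
        (ENNReal.ofReal_le_ofReal ?_)
      simp only [hI]
      gcongr
      linarith)
    -- `v` equals `2 ^ k` off a set of finite measure, so it can only approach `2 ^ k` at infinity
    have hbk : b = 2 ^ k := by
      by_contra hne
      have hτ : 0 < |2 ^ k - b| / 2 := by
        have : (2 : ℝ) ^ k - b ≠ 0 := sub_ne_zero.2 (Ne.symm hne)
        positivity
      have hcov : (univ : Set X) ⊆
          {x | (2 : ℝ) ^ k < |f x - c|} ∪ {x | |2 ^ k - b| / 2 < |v x - b|} := by
        intro x _
        by_cases hx : (2 : ℝ) ^ k < |f x - c|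
        · exact Or.inl hx
        · right
          have hvx : v x = 2 ^ k := max_eq_left ((min_le_left _ _).trans (not_lt.1 hx))
          simp only [mem_ofPred_eq, hvx]
          linarith
      have hlt : μ univ < ⊤ := (measure_mono hcov).trans_lt ((measure_union_le _ _).trans_lt
        (ENNReal.add_lt_top.2 ⟨(hc _ h2k).trans_lt ENNReal.ofReal_lt_top,
          (hb _ hτ).trans_lt ENNReal.ofReal_lt_top⟩))
      exact hlt.ne hXinf
    calc μ (S (k + 1)) ≤ μ {x | (2 : ℝ) ^ (k - 1) < |v x - b|} := by
          refine measure_mono_ae ?_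
          filter_upwards [hww'] with x hx hxS
          have h1 : (2 : ℝ) ^ (k + 1) < w x := hx ▸ hxS.1
          have hvx : v x = 2 ^ (k + 1) := by
            simp only [hv]
            rw [min_eq_right h1.le, max_eq_right (by linarith)]
          change (2 : ℝ) ^ (k - 1) < |v x - b|
          rw [hvx, hbk, h2k1, h2k2, abs_of_pos (by linarith)]
          linarith
      _ ≤ _ := hb _ (by positivity)
  calc ∫⁻ x, ENNReal.ofReal |f x - c| ^ q ∂μ = ∫⁻ x, ENNReal.ofReal (w' x) ^ q ∂μ := by
        refine lintegral_congr_ae ?_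
        filter_upwards [hww'] with x hx
        rw [← hx]
    _ ≤ ∑' k : ℤ, ENNReal.ofReal (((2 : ℝ) ^ (k + 1)) ^ q) * μ (S k) :=
      lintegral_rpow_le_tsum_dyadic hw'm hq0
    _ = ∑' k : ℤ, ENNReal.ofReal (((2 : ℝ) ^ (k + 1 + 1)) ^ q) * μ (S (k + 1)) :=
      ((Equiv.addRight (1 : ℤ)).tsum_eq
        (fun k => ENNReal.ofReal (((2 : ℝ) ^ (k + 1)) ^ q) * μ (S k))).symm
    _ ≤ ∑' k : ℤ, ENNReal.ofReal (8 ^ q * K * I k ^ β) := by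
      refine ENNReal.tsum_le_tsum fun k => ?_
      refine (mul_le_mul' le_rfl (hlevel k)).trans (le_of_eq ?_)
      rw [← ENNReal.ofReal_mul (by positivity)]
      congr 1
      have e1 : (2 : ℝ) ^ (k + 1 + 1) = 8 * 2 ^ (k - 1) := by
        have : k + 1 + 1 = 3 + (k - 1) := by ring
        rw [this, zpow_add₀ (by norm_num)]
        norm_num
      rw [e1, Real.mul_rpow (by norm_num) (by positivity)]
      have : (0 : ℝ) < ((2 : ℝ) ^ (k - 1)) ^ q := by positivity
      field_simp
    _ < ⊤ := ((summable_rpow_of_one_le hIpos hIsum hβ1).mul_left _).tsum_ofReal_lt_top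
end

section
/- Let 1 ≤ p < ∞, let (X,d,μ) satisfy the standing assumptions, let x₀ ∈ X and 0 < r < R. Let Γ(B(x₀,r), X ∖ B(x₀,R)) be the family of all 1-Lipschitz maps γ : [0,L] → X, L ≥ 0, such that one of the endpoints γ(0), γ(L) lies in B(x₀,r) and the other lies in X ∖ B(x₀,R). Then cap_p(B(x₀,r), X ∖ B(x₀,R)) = Mod_p(Γ(B(x₀,r), X ∖ B(x₀,R))). -/
/-!
If `(u, g)` competes for the capacity, then the upper gradient inequality along a curve joining
the ball to the complement of the larger ball gives `1 ≤ ∫ g`, so `g` is admissible for the curve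
family. Hence the modulus is at most the capacity.

Conversely, let `h` be admissible, `B = B(x₀,R)` and `F = X ∖ B`. By Vitali–Carathéodory (the
measure is regular, being finite on bounded sets of a proper space), the sum of `h ^ p` and
a small multiple of the indicator of `B` is dominated by a lower semicontinuous function with nearly
the same integral; let `k ≥ h` be its `p`-th root. Let `v x` be the infimum of the `k`-lengths of curves from `x` to `F` (`weightedDist`) and
`u = min v 1` (`potential`). Then `u = 0` on `F`, `u = 1` on the small ball by admissibility, and
concatenating and reversing curves shows that `k` is an upper gradient of `u`
(`isUpperGradient_potential`).

The delicate point is that `u` is Borel measurable. Since `k` is bounded below on `B`, nearly optimal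
curves, stopped when they first hit `F`, have bounded length (`exists_short_curve`). By
Arzelà–Ascoli (`exists_subseq_tendsto_curve`) they subconverge, and by Fatou's lemma the `k`-length
is lower semicontinuous along the subsequence (`lintegral_curve_le_liminf`). So `v` is lower
semicontinuous (`lowerSemicontinuous_weightedDist`).
-/

open MeasureTheory Metric Set Filter
open scoped ENNReal NNReal Topology

/-- The relative `p`-capacity of the condenser `(E,F)`: the infimum of `∫ gᵖ dμ` over all
`p`-integrable measurable `u` with `u ≥ 1` on `E`, `u ≤ 0` on `F`, and all upper gradients
`g` of `u`. -/
noncomputable def relCap {X : Type*} [MetricSpace X] [MeasurableSpace X]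
    (p : ℝ) (μ : Measure X) (E F : Set X) : ℝ≥0∞ :=
  ⨅ (u : X → ℝ) (g : X → ℝ≥0∞) (_ : Measurable u)
    (_ : (∫⁻ x, ENNReal.ofReal |u x| ^ p ∂μ) < ⊤)
    (_ : ∀ x ∈ E, 1 ≤ u x) (_ : ∀ x ∈ F, u x ≤ 0)
    (_ : Measurable g) (_ : IsUpperGradient g u), ∫⁻ x, g x ^ p ∂μ

/-- `X` is `p`-parabolic: for every base ball, the relative `p`-capacity to the complement of
`B(x₀,R)` tends to `0` as `R → ∞`. -/
def IsPParabolic {X : Type*} [MetricSpace X] [MeasurableSpace X]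
    (p : ℝ) (μ : Measure X) : Prop :=
  ∀ (x₀ : X) (r : ℝ), 0 < r →
    Tendsto (fun R : ℝ => relCap p μ (ball x₀ r) ((ball x₀ R)ᶜ)) atTop (𝓝 0)

/-- The `p`-modulus of a family of finite curves, given as pairs `(L, γ)` with `γ : [0,L] → X`:
the infimum of `∫ hᵖ dμ` over Borel `h` with `∫₀^L h(γ(t)) dt ≥ 1` for every curve in the
family. -/
noncomputable def CurveModulus {X : Type*} [MeasurableSpace X] (p : ℝ) (μ : Measure X)
    (Γ : Set (ℝ × (ℝ → X))) : ℝ≥0∞ :=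
  ⨅ (h : X → ℝ≥0∞) (_ : Measurable h)
    (_ : ∀ c ∈ Γ, 1 ≤ ∫⁻ t in Set.Icc 0 c.1, h (c.2 t)), ∫⁻ x, h x ^ p ∂μ

/-! ### Operations on curves -/

/-- The concatenation of `σ` and `γ`: it follows `σ` up to time `M`, and from then on it follows `γ`
started at time `0`. -/
noncomputable def concatCurve {X : Type*} (M : ℝ) (σ γ : ℝ → X) : ℝ → X :=
  fun t => if t ≤ M then σ t else γ (t - M)

lemma lipschitzWith_concatCurve {X : Type*} [MetricSpace X] {M : ℝ} {σ γ : ℝ → X}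
    (hσ : LipschitzWith 1 σ) (hγ : LipschitzWith 1 γ) (h : σ M = γ 0) :
    LipschitzWith 1 (concatCurve M σ γ) := by
  have key : ∀ s t : ℝ, s ≤ t → dist (concatCurve M σ γ s) (concatCurve M σ γ t) ≤ t - s := by
    intro s t hst
    have h1 : ∀ a b, dist (σ a) (σ b) ≤ |a - b| := fun a b => by
      simpa [Real.dist_eq] using hσ.dist_le_mul a b
    have h2 : ∀ a b, dist (γ a) (γ b) ≤ |a - b| := fun a b => by
      simpa [Real.dist_eq] using hγ.dist_le_mul a b
    unfold concatCurve
    split_ifs with hs ht ht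
    · have := h1 s t
      rwa [abs_sub_comm, abs_of_nonneg (by linarith)] at this
    · have e1 := h1 s M
      have e2 := h2 0 (t - M)
      rw [abs_sub_comm, abs_of_nonneg (by linarith)] at e1 e2
      have := dist_triangle (σ s) (σ M) (γ (t - M))
      rw [h] at this e1
      linarith
    · linarith
    · have := h2 (s - M) (t - M)
      rw [abs_sub_comm, abs_of_nonneg (by linarith)] at this
      linarith
  refine LipschitzWith.of_dist_le_mul fun s t => ?_
  rw [Real.dist_eq, NNReal.coe_one, one_mul]
  rcases le_total s t with hst | hst
  · rw [abs_sub_comm, abs_of_nonneg (by linarith)]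
    exact key s t hst
  · rw [dist_comm, abs_of_nonneg (by linarith)]
    exact key t s hst

/-- A curve on `[0,L]` extends to a `1`-Lipschitz map on `ℝ`, constant outside `[0,L]`. -/
lemma exists_lipschitzWith_extension {X : Type*} [MetricSpace X] {L : ℝ} {γ : ℝ → X}
    (hL : 0 ≤ L) (hγ : LipschitzOnWith 1 γ (Icc 0 L)) :
    ∃ γ' : ℝ → X, LipschitzWith 1 γ' ∧ EqOn γ' γ (Icc 0 L) := by
  refine ⟨fun t => γ (projIcc 0 L hL t), ?_, fun t ht => by simp [projIcc_of_mem hL ht]⟩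
  have h := (LipschitzOnWith.to_restrict hγ).comp (LipschitzWith.projIcc hL)
  rw [one_mul] at h
  exact h

lemma lintegral_reverse {L : ℝ} (f : ℝ → ℝ≥0∞) (hf : Measurable f) :
    ∫⁻ t in Icc 0 L, f (L - t) = ∫⁻ t in Icc 0 L, f t := by
  have h := (volume.measurePreserving_sub_left L).setLIntegral_comp_preimage
    (measurableSet_Icc (a := (0 : ℝ)) (b := L)) hf
  rw [← h]
  congr 2
  ext t
  simp only [mem_preimage, mem_Icc]
  constructor <;> intro h <;> constructor <;> linarith [h.1, h.2]

lemma lintegral_shift {M L : ℝ} (f : ℝ → ℝ≥0∞) (hf : Measurable f) :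
    ∫⁻ t in Icc M (M + L), f (t - M) = ∫⁻ t in Icc 0 L, f t := by
  have h := (measurePreserving_sub_right volume M).setLIntegral_comp_preimage
    (measurableSet_Icc (a := (0 : ℝ)) (b := L)) hf
  rw [← h]
  congr 2
  ext t
  simp only [mem_preimage, mem_Icc]
  constructor <;> intro h <;> constructor <;> linarith [h.1, h.2]

/-! ### Compactness of curves and semicontinuity of length -/

/-- Arzelà–Ascoli for `1`-Lipschitz curves in a proper space with converging starting points. -/
lemma exists_subseq_tendsto_curve {X : Type*} [MetricSpace X] [ProperSpace X] {C : ℝ}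
    (hC : 0 ≤ C) {γ : ℕ → ℝ → X} (hγ : ∀ n, LipschitzWith 1 (γ n)) {x : X}
    (hx : Tendsto (fun n => γ n 0) atTop (𝓝 x)) :
    ∃ (σ : ℝ → X) (φ : ℕ → ℕ), LipschitzWith 1 σ ∧ StrictMono φ ∧
      ∀ t ∈ Icc 0 C, Tendsto (fun n => γ (φ n) t) atTop (𝓝 (σ t)) := by
  obtain ⟨ρ, hρ⟩ : ∃ ρ, ∀ n, dist (γ n 0) x ≤ ρ := by
    obtain ⟨ρ, hρ⟩ := (hx.dist (tendsto_const_nhds (x := x))).bddAbove_range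
    exact ⟨ρ, fun n => hρ ⟨n, rfl⟩⟩
  let A : Set (BoundedContinuousFunction (Icc 0 C) X) :=
    {f | LipschitzWith 1 f ∧ dist (f ⟨0, le_rfl, hC⟩) x ≤ ρ}
  have hA : IsCompact (closure A) := by
    refine BoundedContinuousFunction.arzela_ascoli (closedBall x (C + ρ))
      (isCompact_closedBall _ _) A ?_ ?_
    · rintro f t ⟨hf, hf0⟩
      have h1 : dist (f t) (f ⟨0, le_rfl, hC⟩) ≤ _ := hf.dist_le_mul t ⟨0, le_rfl, hC⟩
      have h2 : dist t ⟨0, le_rfl, hC⟩ ≤ C := by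
        rw [Subtype.dist_eq, Real.dist_eq, sub_zero, abs_of_nonneg t.2.1]
        exact t.2.2
      rw [NNReal.coe_one, one_mul] at h1
      have := dist_triangle (f t) (f ⟨0, le_rfl, hC⟩) x
      rw [mem_closedBall]
      linarith
    · exact (LipschitzWith.uniformEquicontinuous _ 1 fun f => f.2.1).equicontinuous
  let f : ℕ → BoundedContinuousFunction (Icc 0 C) X := fun n =>
    BoundedContinuousFunction.mkOfCompact ⟨fun t => γ n t, by
      have := (hγ n).continuous
      fun_prop⟩
  have hfA : ∀ n, f n ∈ closure A := fun n => subset_closure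
    ⟨fun s t => hγ n s t, hρ n⟩
  obtain ⟨F, -, φ, hφ, hF⟩ := hA.tendsto_subseq hfA
  have hpt : ∀ t : Icc 0 C, Tendsto (fun n => γ (φ n) t) atTop (𝓝 (F t)) := fun t =>
    ((BoundedContinuousFunction.lipschitz_eval_const t).continuous.tendsto F).comp hF
  have hFl : LipschitzWith 1 F := by
    refine LipschitzWith.of_dist_le_mul fun s t => ?_
    exact le_of_tendsto ((hpt s).dist (hpt t))
      (Eventually.of_forall fun n => (hγ (φ n)).dist_le_mul s t)
  refine ⟨fun t => F (projIcc 0 C hC t), φ, ?_, hφ, fun t ht => ?_⟩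
  · have h := hFl.comp (LipschitzWith.projIcc hC)
    rw [one_mul] at h
    exact h
  · simpa [projIcc_of_mem hC ht] using hpt ⟨t, ht⟩

/-- Line integrals of a lower semicontinuous density are lower semicontinuous along converging
curves of converging lengths: Fatou's lemma. -/
lemma lintegral_curve_le_liminf {X : Type*} [MetricSpace X] [MeasurableSpace X] [BorelSpace X]
    {k : X → ℝ≥0∞} (hk : LowerSemicontinuous k) {C : ℝ} {γ : ℕ → ℝ → X}
    (hγ : ∀ n, LipschitzWith 1 (γ n)) {σ : ℝ → X} {ℓ : ℕ → ℝ} {L : ℝ} (hLC : L ≤ C)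
    (hℓ : Tendsto ℓ atTop (𝓝 L))
    (hσ : ∀ t ∈ Icc 0 C, Tendsto (fun n => γ n t) atTop (𝓝 (σ t))) :
    ∫⁻ t in Icc 0 L, k (σ t) ≤ liminf (fun n => ∫⁻ t in Icc 0 (ℓ n), k (γ n t)) atTop := by
  have hIco : ∫⁻ t in Icc 0 L, k (σ t) = ∫⁻ t in Ico 0 L, k (σ t) :=
    setLIntegral_congr Ico_ae_eq_Icc.symm
  -- the endpoint `L` is dropped because `t ≤ ℓ n` may fail for every `n` when `t = L`
  rw [hIco, ← lintegral_indicator measurableSet_Ico]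
  simp_rw [← lintegral_indicator (measurableSet_Icc)]
  refine le_trans (lintegral_mono fun t => ?_) (lintegral_liminf_le fun n =>
    (hk.measurable.comp (hγ n).continuous.measurable).indicator measurableSet_Icc)
  by_cases ht : t ∈ Ico 0 L
  · rw [indicator_of_mem ht]
    refine (hk.le_liminf (σ t)).trans <|
      ((hσ t ⟨ht.1, ht.2.le.trans hLC⟩).liminf_le_liminf_comp (u := k)).trans ?_
    refine liminf_le_liminf ((hℓ.eventually (lt_mem_nhds ht.2)).mono fun n hn => ?_)
    rw [indicator_of_mem (show t ∈ Icc 0 (ℓ n) from ⟨ht.1, hn.le⟩), Function.comp_apply]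
  · simp [indicator_of_notMem ht]

/-! ### The weighted distance to a set -/

/-- The `k`-weighted distance from `x` to `F`: the infimum of the `k`-lengths of the curves that
start at `x` and end in `F`. The curves are taken `1`-Lipschitz on all of `ℝ`, which loses
nothing since every curve on `[0,L]` extends. -/
noncomputable def weightedDist {X : Type*} [MetricSpace X] (k : X → ℝ≥0∞) (F : Set X) (x : X) :
    ℝ≥0∞ :=
  ⨅ (L : ℝ) (γ : ℝ → X) (_ : 0 ≤ L) (_ : LipschitzWith 1 γ) (_ : γ 0 = x) (_ : γ L ∈ F),
    ∫⁻ t in Icc 0 L, k (γ t)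

lemma weightedDist_le {X : Type*} [MetricSpace X] {k : X → ℝ≥0∞} {F : Set X} {L : ℝ}
    {γ : ℝ → X} (hL : 0 ≤ L) (hγ : LipschitzWith 1 γ) (hF : γ L ∈ F) :
    weightedDist k F (γ 0) ≤ ∫⁻ t in Icc 0 L, k (γ t) :=
  iInf_le_of_le L <| iInf_le_of_le γ <| iInf_le_of_le hL <| iInf_le_of_le hγ <|
    iInf_le_of_le rfl <| iInf_le_of_le hF le_rfl

lemma weightedDist_eq_zero {X : Type*} [MetricSpace X] {k : X → ℝ≥0∞} {F : Set X} {x : X}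
    (hx : x ∈ F) : weightedDist k F x = 0 := by
  have h := weightedDist_le (k := k) (F := F) (γ := fun _ => x) le_rfl
    ((LipschitzWith.const x).weaken zero_le_one) hx
  simpa using h

lemma exists_curve_of_weightedDist_lt {X : Type*} [MetricSpace X] {k : X → ℝ≥0∞} {F : Set X}
    {x : X} {a : ℝ≥0∞} (h : weightedDist k F x < a) :
    ∃ (L : ℝ) (γ : ℝ → X), 0 ≤ L ∧ LipschitzWith 1 γ ∧ γ 0 = x ∧ γ L ∈ F ∧
      ∫⁻ t in Icc 0 L, k (γ t) < a := by
  simp only [weightedDist, iInf_lt_iff] at h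
  obtain ⟨L, γ, h1, h2, h3, h4, h5⟩ := h
  exact ⟨L, γ, h1, h2, h3, h4, h5⟩

/-- Prepending a curve changes the weighted distance by at most its `k`-length. -/
lemma weightedDist_le_add {X : Type*} [MetricSpace X] [MeasurableSpace X] [BorelSpace X]
    {k : X → ℝ≥0∞} (hk : Measurable k) {F : Set X} {M : ℝ} {σ : ℝ → X} (hM : 0 ≤ M)
    (hσ : LipschitzWith 1 σ) :
    weightedDist k F (σ 0) ≤ weightedDist k F (σ M) + ∫⁻ t in Icc 0 M, k (σ t) := by
  refine ENNReal.le_of_forall_pos_le_add fun ε hε hfin => ?_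
  have hv : weightedDist k F (σ M) < ⊤ := (le_add_right le_rfl).trans_lt hfin
  obtain ⟨L, γ, hL, hγ, h0, hLF, hlt⟩ := exists_curve_of_weightedDist_lt
    (ENNReal.lt_add_right hv.ne (ENNReal.coe_pos.2 hε).ne')
  have hτ := lipschitzWith_concatCurve hσ hγ h0.symm
  have hτ0 : concatCurve M σ γ 0 = σ 0 := by simp [concatCurve, hM]
  have hend : concatCurve M σ γ (M + L) = γ L := by
    rcases hL.eq_or_lt with rfl | hpos
    · simp [concatCurve, h0]
    · simp [concatCurve, hpos]
  have hle := weightedDist_le (k := k) (F := F) (add_nonneg hM hL) hτ (by rwa [hend])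
  rw [hτ0] at hle
  have h1 : ∫⁻ t in Icc 0 M, k (concatCurve M σ γ t) = ∫⁻ t in Icc 0 M, k (σ t) :=
    setLIntegral_congr_fun measurableSet_Icc fun t ht => by simp [concatCurve, ht.2]
  have h2 : ∫⁻ t in Icc M (M + L), k (concatCurve M σ γ t) = ∫⁻ t in Icc 0 L, k (γ t) := by
    rw [← lintegral_shift (M := M) (fun t => k (γ t)) (hk.comp hγ.continuous.measurable)]
    refine setLIntegral_congr_fun measurableSet_Icc fun t ht => ?_
    rcases ht.1.eq_or_lt with rfl | hpos
    · simp [concatCurve, h0]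
    · simp [concatCurve, hpos.not_ge]
  have hsplit : ∫⁻ t in Icc 0 (M + L), k (concatCurve M σ γ t) ≤
      (∫⁻ t in Icc 0 M, k (σ t)) + ∫⁻ t in Icc 0 L, k (γ t) := by
    rw [← h1, ← h2]
    exact (lintegral_mono_set Icc_subset_Icc_union_Icc).trans (lintegral_union_le _ _ _)
  calc weightedDist k F (σ 0)
      ≤ (∫⁻ t in Icc 0 M, k (σ t)) + ∫⁻ t in Icc 0 L, k (γ t) := hle.trans hsplit
    _ ≤ (∫⁻ t in Icc 0 M, k (σ t)) + (weightedDist k F (σ M) + ε) := by gcongr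
    _ = _ := by ring

/-- Stopping a curve when it first meets the closed set `F` keeps it off `F` before its end, so a
bound on its `k`-length bounds its length as soon as `k ≥ a > 0` off `F`. -/
lemma exists_short_curve {X : Type*} [MetricSpace X] {k : X → ℝ≥0∞} {F : Set X}
    (hF : IsClosed F) {a b : ℝ≥0∞} (ha0 : a ≠ 0) (ha : a ≠ ⊤) (hb : b ≠ ⊤)
    (hak : ∀ x ∉ F, a ≤ k x) {x : X} (h : weightedDist k F x < b) :
    ∃ (L : ℝ) (γ : ℝ → X), 0 ≤ L ∧ L ≤ (b / a).toReal ∧ LipschitzWith 1 γ ∧ γ 0 = x ∧ γ L ∈ F ∧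
      ∫⁻ t in Icc 0 L, k (γ t) < b := by
  obtain ⟨L, γ, hL, hγ, h0, hLF, hlt⟩ := exists_curve_of_weightedDist_lt h
  have hcpt : IsCompact (Icc 0 L ∩ γ ⁻¹' F) :=
    isCompact_Icc.inter_right (hF.preimage hγ.continuous)
  obtain ⟨ℓ, ⟨hℓ, hℓF⟩, hmin⟩ := hcpt.exists_isLeast ⟨L, ⟨hL, le_rfl⟩, hLF⟩
  have hlt' : ∫⁻ t in Icc 0 ℓ, k (γ t) < b :=
    (lintegral_mono_set (Icc_subset_Icc_right hℓ.2)).trans_lt hlt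
  refine ⟨ℓ, γ, hℓ.1, ?_, hγ, h0, hℓF, hlt'⟩
  have hlen : a * ENNReal.ofReal ℓ ≤ ∫⁻ t in Icc 0 ℓ, k (γ t) := by
    calc a * ENNReal.ofReal ℓ = ∫⁻ _ in Ico 0 ℓ, a := by simp
      _ ≤ ∫⁻ t in Ico 0 ℓ, k (γ t) := setLIntegral_mono' measurableSet_Ico fun t ht =>
          hak _ fun hmem => ht.2.not_ge (hmin ⟨⟨ht.1, ht.2.le.trans hℓ.2⟩, hmem⟩)
      _ ≤ _ := lintegral_mono_set Ico_subset_Icc_self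
  rw [← ENNReal.ofReal_le_iff_le_toReal (ENNReal.div_ne_top hb ha0),
    ENNReal.le_div_iff_mul_le (.inl ha0) (.inl ha), mul_comm]
  exact hlen.trans hlt'.le

/-- If `k ≥ a > 0` off `F`, nearly optimal curves have bounded length, hence subconverge,
and the limit curve is at least as short. -/
lemma lowerSemicontinuous_weightedDist {X : Type*} [MetricSpace X] [MeasurableSpace X]
    [BorelSpace X] [ProperSpace X] {k : X → ℝ≥0∞} (hk : LowerSemicontinuous k) {F : Set X}
    (hF : IsClosed F) {a : ℝ≥0∞} (ha0 : a ≠ 0) (ha : a ≠ ⊤) (hak : ∀ x ∉ F, a ≤ k x) :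
    LowerSemicontinuous (weightedDist k F) := by
  rw [lowerSemicontinuous_iff_isClosed_preimage]
  intro b
  by_cases hb : b = ⊤
  · simp [hb]
  refine IsSeqClosed.isClosed fun x y hx hy => ?_
  have hδ : ∀ n : ℕ, ((n : ℝ≥0∞) + 1)⁻¹ ≠ 0 := fun n => by simp
  have hδ1 : ∀ n : ℕ, ((n : ℝ≥0∞) + 1)⁻¹ ≤ 1 := fun n => by simp
  have hbn : ∀ n : ℕ, b + ((n : ℝ≥0∞) + 1)⁻¹ ≠ ⊤ := fun n => by simp [hb]
  choose ℓ γ hℓ0 hℓC hγ h0 hend hlt using fun n =>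
    exists_short_curve hF ha0 ha (hbn n) hak
      ((hx n : weightedDist k F (x n) ≤ b).trans_lt (ENNReal.lt_add_right hb (hδ n)))
  set C := ((b + 1) / a).toReal
  have hC : 0 ≤ C := ENNReal.toReal_nonneg
  have hℓC' : ∀ n, ℓ n ∈ Icc 0 C := fun n => ⟨hℓ0 n, (hℓC n).trans <|
    ENNReal.toReal_mono (ENNReal.div_ne_top (by simp [hb]) ha0) (by gcongr; exact hδ1 n)⟩
  obtain ⟨L, hL, ψ, hψ, hψL⟩ := isCompact_Icc.tendsto_subseq hℓC'
  obtain ⟨σ, φ, hσ, hφ, hlim⟩ := exists_subseq_tendsto_curve hC (fun n => hγ (ψ n)) (x := y)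
    (by simpa only [h0, Function.comp_def] using hy.comp hψ.tendsto_atTop)
  have hL' : Tendsto (fun n => ℓ (ψ (φ n))) atTop (𝓝 L) := hψL.comp hφ.tendsto_atTop
  have hσ0 : σ 0 = y := tendsto_nhds_unique (hlim 0 ⟨le_rfl, hC⟩) <| by
    simpa only [h0, Function.comp_def] using hy.comp (hψ.tendsto_atTop.comp hφ.tendsto_atTop)
  have hσL : σ L ∈ F := by
    have hd : Tendsto (fun n => dist (γ (ψ (φ n)) L) (γ (ψ (φ n)) (ℓ (ψ (φ n))))) atTop (𝓝 0) := by
      refine squeeze_zero (fun _ => dist_nonneg) (fun n => ?_)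
        (tendsto_iff_dist_tendsto_zero.1 hL')
      simpa [dist_comm] using (hγ (ψ (φ n))).dist_le_mul L (ℓ (ψ (φ n)))
    exact hF.mem_of_tendsto (tendsto_of_tendsto_of_dist (hlim L hL) hd)
      (Eventually.of_forall fun n => hend _)
  have hbound := lintegral_curve_le_liminf hk (fun n => hγ (ψ (φ n))) hL.2 hL' hlim
  have hδlim : Tendsto (fun n => b + ((ψ (φ n) : ℕ) + 1 : ℝ≥0∞)⁻¹) atTop (𝓝 b) := by
    have h1 : Tendsto (fun n : ℕ => ((n : ℝ≥0∞) + 1)⁻¹) atTop (𝓝 0) := by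
      simpa [Function.comp_def] using (ENNReal.tendsto_inv_nat_nhds_zero.comp (tendsto_add_atTop_nat 1))
    simpa using (h1.comp (hψ.tendsto_atTop.comp hφ.tendsto_atTop)).const_add b
  have h2 : liminf (fun n => ∫⁻ t in Icc 0 (ℓ (ψ (φ n))), k (γ (ψ (φ n)) t)) atTop ≤ b :=
    (liminf_le_liminf (Eventually.of_forall fun n => (hlt (ψ (φ n))).le)).trans
      hδlim.liminf_eq.le
  have := (weightedDist_le (k := k) hL.1 hσ hσL).trans (hbound.trans h2)
  rwa [hσ0] at this

/-! ### The potential -/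

/-- The truncation at height `1` of the weighted distance. -/
noncomputable def potential {X : Type*} [MetricSpace X] (k : X → ℝ≥0∞) (F : Set X) (x : X) : ℝ :=
  (min (weightedDist k F x) 1).toReal

/-- `weightedDist_le_add` along a curve and along its reversal bounds both signs of the
increment; truncation does not increase it. -/
lemma isUpperGradient_potential {X : Type*} [MetricSpace X] [MeasurableSpace X] [BorelSpace X]
    {k : X → ℝ≥0∞} (hk : Measurable k) {F : Set X} : IsUpperGradient k (potential k F) := by
  intro L γ hL hγ
  obtain ⟨σ, hσ, heq⟩ := exists_lipschitzWith_extension hL hγ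
  have hint : ∫⁻ t in Icc 0 L, k (γ t) = ∫⁻ t in Icc 0 L, k (σ t) :=
    setLIntegral_congr_fun measurableSet_Icc fun t ht => by simp only [heq ht]
  rw [hint, ← heq ⟨le_rfl, hL⟩, ← heq ⟨hL, le_rfl⟩]
  have h1 := weightedDist_le_add hk (F := F) hL hσ
  have hrev : LipschitzWith 1 fun t => σ (L - t) := by
    refine LipschitzWith.of_dist_le_mul fun s t => ?_
    have h := hσ.dist_le_mul (L - s) (L - t)
    rwa [Real.dist_eq (L - s), sub_sub_sub_cancel_left, ← Real.dist_eq, dist_comm t s] at h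
  have h2 := weightedDist_le_add hk (F := F) hL hrev
  rw [lintegral_reverse (fun t => k (σ t)) (hk.comp hσ.continuous.measurable)] at h2
  simp only [sub_zero, sub_self] at h2
  generalize ∫⁻ t in Icc 0 L, k (σ t) = I at h1 h2
  unfold potential
  generalize weightedDist k F (σ 0) = v at h1 h2
  generalize weightedDist k F (σ L) = w at h1 h2
  by_cases hI : I = ⊤
  · simp [hI]
  have trunc : ∀ {v w : ℝ≥0∞}, v ≤ w + I → (min v 1).toReal - (min w 1).toReal ≤ I.toReal := by
    intro v w h
    have hw : min w 1 ≠ ⊤ := (min_le_right _ _).trans_lt ENNReal.one_lt_top |>.ne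
    have : min v 1 ≤ min w 1 + I := by
      rw [min_add]
      exact min_le_min h le_self_add
    have := ENNReal.toReal_mono (ENNReal.add_ne_top.2 ⟨hw, hI⟩) this
    rw [ENNReal.toReal_add hw hI] at this
    linarith
  rw [ENNReal.ofReal_le_iff_le_toReal hI]
  exact abs_sub_le_iff.2 ⟨trunc h2, trunc h1⟩

/-! ### Capacity equals modulus -/

/-- under the standing assumptions, for `x₀ ∈ X` and `0 < r < R`, the relative
`p`-capacity of `(B(x₀,r), X ∖ B(x₀,R))` equals the `p`-modulus of the family of `1`-Lipschitz
curves with one endpoint in `B(x₀,r)` and the other in `X ∖ B(x₀,R)`. -/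
theorem statement12 {X : Type*} [MetricSpace X] [MeasurableSpace X] [BorelSpace X]
    [ProperSpace X] [ConnectedSpace X]
    (μ : Measure X) (hXinf : μ Set.univ = ⊤)
    (hball : ∀ (x : X) (r : ℝ), 0 < r → 0 < μ (ball x r) ∧ μ (ball x r) < ⊤)
    (p : ℝ) (hp : 1 ≤ p)
    (x₀ : X) (r R : ℝ) (hr : 0 < r) (hrR : r < R) :
    relCap p μ (ball x₀ r) ((ball x₀ R)ᶜ) =
      CurveModulus p μ {c : ℝ × (ℝ → X) | 0 ≤ c.1 ∧ LipschitzOnWith 1 c.2 (Set.Icc 0 c.1) ∧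
        ((c.2 0 ∈ ball x₀ r ∧ c.2 c.1 ∈ (ball x₀ R)ᶜ) ∨
         (c.2 c.1 ∈ ball x₀ r ∧ c.2 0 ∈ (ball x₀ R)ᶜ))} := by
  set B := ball x₀ R
  have hBF : ∀ x ∉ Bᶜ, x ∈ B := fun x hx => not_not.1 hx
  have hp0 : 0 < p := zero_lt_one.trans_le hp
  have hsub : ball x₀ r ⊆ B := ball_subset_ball hrR.le
  apply le_antisymm
  · refine le_iInf fun h => le_iInf fun hh => le_iInf fun hadm => ?_
    refine ENNReal.le_of_forall_pos_le_add fun δ hδ _ => ?_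
    obtain ⟨hB0, hBfin⟩ := hball x₀ R (hr.trans hrR)
    have : IsFiniteMeasureOnCompacts μ := ⟨fun K hK => by
      obtain ⟨ρ, hρ⟩ := hK.isBounded.subset_ball_lt 0 x₀
      exact (measure_mono hρ.2).trans_lt (hball x₀ ρ hρ.1).2⟩
    -- half of `δ` pays for the lower bound `ε` on `B`, half for Vitali–Carathéodory
    have hδ2 : ((δ : ℝ≥0∞) / 2) ≠ 0 := by simp [hδ.ne']
    set ε : ℝ≥0∞ := (δ : ℝ≥0∞) / 2 / μ B
    have hε0 : ε ≠ 0 := (ENNReal.div_pos hδ2 hBfin.ne).ne'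
    have hε : ε ≠ ⊤ := ENNReal.div_ne_top (ENNReal.div_ne_top ENNReal.coe_ne_top two_ne_zero) hB0.ne'
    have hf : Measurable fun x => h x ^ p + B.indicator (fun _ => ε) x :=
      (hh.pow_const p).add (measurable_const.indicator measurableSet_ball)
    obtain ⟨g, hfg, hg, hgint⟩ := exists_le_lowerSemicontinuous_lintegral_ge μ _ hf hδ2
    set k : X → ℝ≥0∞ := fun x => g x ^ p⁻¹
    have hk : LowerSemicontinuous k :=
      (ENNReal.continuous_rpow_const (y := p⁻¹)).comp_lowerSemicontinuous hg
        (ENNReal.monotone_rpow_of_nonneg (inv_nonneg.2 hp0.le))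
    have hkp : ∀ x, k x ^ p = g x := fun x => ENNReal.rpow_inv_rpow hp0.ne' _
    have hhk : ∀ x, h x ≤ k x := fun x => by
      rw [← ENNReal.rpow_le_rpow_iff hp0, hkp]
      exact le_self_add.trans (hfg x)
    have hεk : ∀ x ∉ Bᶜ, ε ^ p⁻¹ ≤ k x := fun x hx => by
      refine ENNReal.rpow_le_rpow (le_trans ?_ (hfg x)) (inv_nonneg.2 hp0.le)
      rw [indicator_of_mem (hBF x hx)]
      exact le_add_self
    have hFc : IsClosed Bᶜ := isOpen_ball.isClosed_compl
    have hv : LowerSemicontinuous (weightedDist k Bᶜ) := lowerSemicontinuous_weightedDist hk hFc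
      (by simp [hε0, hε]) (ENNReal.rpow_ne_top_of_nonneg (inv_nonneg.2 hp0.le) hε) hεk
    have hint : ∫⁻ x, k x ^ p ∂μ ≤ (∫⁻ x, h x ^ p ∂μ) + δ := by
      simp_rw [hkp]
      refine hgint.trans_eq ?_
      rw [lintegral_add_left (hh.pow_const p), lintegral_indicator measurableSet_ball,
        setLIntegral_const, ENNReal.div_mul_cancel hB0.ne' hBfin.ne, add_assoc, ENNReal.add_halves]
    refine le_trans ?_ hint
    refine iInf_le_of_le (potential k Bᶜ) <| iInf_le_of_le k <|
      iInf_le_of_le (hv.measurable.min measurable_const).ennreal_toReal <| iInf_le_of_le ?_ <|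
      iInf_le_of_le ?_ <| iInf_le_of_le ?_ <| iInf_le_of_le hk.measurable <|
      iInf_le_of_le (isUpperGradient_potential hk.measurable) le_rfl
    · have hle : ∀ x, ENNReal.ofReal |potential k Bᶜ x| ^ p ≤ B.indicator (fun _ => 1) x := by
        intro x
        by_cases hx : x ∈ B
        · rw [indicator_of_mem hx]
          refine ENNReal.rpow_le_one ?_ hp0.le
          rw [potential, abs_of_nonneg ENNReal.toReal_nonneg, ENNReal.ofReal_toReal
            ((min_le_right _ _).trans_lt ENNReal.one_lt_top).ne]
          exact min_le_right _ _
        · have : weightedDist k Bᶜ x = 0 := weightedDist_eq_zero hx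
          simp [potential, this, hx, hp0]
      refine (lintegral_mono hle).trans_lt ?_
      rw [lintegral_indicator measurableSet_ball]
      simpa using hBfin
    · intro x hx
      have h1 : 1 ≤ weightedDist k Bᶜ x := by
        by_contra! hlt
        obtain ⟨L, γ, hL, hγ, h0, hend, hI⟩ := exists_curve_of_weightedDist_lt hlt
        refine hI.not_ge ((hadm (L, γ) ⟨hL, hγ.lipschitzOnWith, .inl ⟨?_, hend⟩⟩).trans
          (lintegral_mono fun t => hhk _))
        rwa [← h0] at hx
      simp [potential, h1]
    · intro x hx
      simp [potential, weightedDist_eq_zero (k := k) hx]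
  · refine le_iInf fun u => le_iInf fun g => le_iInf fun _ => le_iInf fun _ => le_iInf fun hE =>
      le_iInf fun hF => le_iInf fun hg => le_iInf fun hug => ?_
    refine iInf_le_of_le g <| iInf_le_of_le hg <| iInf_le_of_le ?_ le_rfl
    rintro ⟨L, γ⟩ ⟨hL, hγ, hends⟩
    refine le_trans ?_ (hug L γ hL hγ)
    rw [ENNReal.one_le_ofReal]
    rcases hends with ⟨h0, h1⟩ | ⟨h1, h0⟩
    · exact le_abs.2 (.inr (by linarith [hE _ h0, hF _ h1]))
    · exact le_abs.2 (.inl (by linarith [hE _ h1, hF _ h0]))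
end

section
/- Let 1 ≤ p < ∞ and let (X,d,μ) satisfy the standing assumptions and be of uniformly locally p-controlled geometry. Let ρ : X → [0,∞] be a Borel function with ∫_X ρ^p dμ < ∞ and let E ⊆ X be an equivalence class of the relation ∼_ρ. Then E is measurable with respect to the completion of μ, and if μ(E) > 0 (as outer measure) then μ(X ∖ E) = 0. -/
/-!
Measurability and the zero-one law are proved separately.

*Measurability.* The class `E` of `x₀` is the image, under the continuous evaluation
`(γ, L) ↦ γ L`, of the set of pairs in the Polish space `C(ℝ, X) × ℝ` for which `0 ≤ L`, `γ` is
`1`-Lipschitz, `γ 0 = x₀` and `∫₀^L ρ(γ t) dt < ∞`. This set is Borel by Tonelli's theorem, so `E`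
is an analytic set (`analyticSet_setOf_rhoRel`). Analytic sets are measurable for the completion of
any locally finite Borel measure on a Polish space (`nullMeasurableSet_of_analyticSet`): an analytic
set of finite outer measure can be exhausted in measure by compact subsets (Choquet's argument,
`exists_isCompact_image_measure_ge`).

*Zero-one law.* Since `∼_ρ` is an equivalence relation, every curve with one endpoint in `E` and the
other outside `E` satisfies `∫ ρ = ∞`. Hence `ε ρ` is an upper gradient of the indicator function of
`E` for every `ε > 0` (`isUpperGradient_indicator`). Letting `ε → 0` in the Poincaré inequality
shows that the indicator function is a.e. constant on each ball of some fixed small radius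
(`ball_dichotomy`), and connectedness of `X` makes it a.e. constant globally
(`null_or_conull_of_ball_dichotomy`).
-/

open MeasureTheory Metric Set Filter
open scoped ENNReal NNReal Topology

/-- `(X,d,μ)` is of uniformly locally `p`-controlled geometry: there are `R₀ ∈ (0,∞]`,
`C_d ≥ 1`, `C, λ > 0` such that the measure is doubling and a `p`-Poincaré inequality holds
at all scales `0 < r < R₀`. -/
def UniformlyLocallyControlledGeometry {X : Type*} [MetricSpace X] [MeasurableSpace X]
    (p : ℝ) (μ : Measure X) : Prop :=
  ∃ (R₀ : ℝ≥0∞) (Cd C lam : ℝ), 0 < R₀ ∧ 1 ≤ Cd ∧ 0 < C ∧ 0 < lam ∧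
    (∀ (x : X) (r : ℝ), 0 < r → ENNReal.ofReal r < R₀ →
      μ (ball x (2 * r)) ≤ ENNReal.ofReal Cd * μ (ball x r)) ∧
    (∀ (u : X → ℝ) (g : X → ℝ≥0∞), LocallyIntegrable u μ → Measurable g →
      IsUpperGradient g u → ∀ (x : X) (r : ℝ), 0 < r → ENNReal.ofReal r < R₀ →
      ENNReal.ofReal (⨍ y in ball x r, |u y - ⨍ z in ball x r, u z ∂μ| ∂μ) ≤
        ENNReal.ofReal (C * r) *
          ((∫⁻ y in ball x (lam * r), g y ^ p ∂μ) / μ (ball x (lam * r))) ^ (1 / p))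

/-- The relation `x ∼_ρ y`: `x = y` or there is a `1`-Lipschitz curve from `x` to `y` along
which `ρ` has finite integral. -/
def RhoRel {X : Type*} [MetricSpace X] (ρ : X → ℝ≥0∞) (x y : X) : Prop :=
  x = y ∨ ∃ L : ℝ, 0 ≤ L ∧ ∃ γ : ℝ → X, LipschitzOnWith 1 γ (Set.Icc 0 L) ∧
    γ 0 = x ∧ γ L = y ∧ (∫⁻ t in Set.Icc 0 L, ρ (γ t)) < ⊤

/-! ### Universal measurability of analytic sets -/

/-- Capacitability of a continuous image of Baire space. Bounding the coordinates one at a time by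
`b 0, b 1, …` keeps the outer measure of the image above `c`, by continuity from below of the outer
measure; the compact set is the image of the box `∏ i, {0, …, b i}`. -/
theorem exists_isCompact_image_measure_ge {X : Type*} [MetricSpace X]
    [MeasurableSpace X] [BorelSpace X] (μ : Measure X) [μ.OuterRegular]
    {f : (ℕ → ℕ) → X} (hf : Continuous f) {c : ℝ≥0∞} (hc : c < μ (range f)) :
    ∃ K : Set X, IsCompact K ∧ K ⊆ range f ∧ c ≤ μ K := by
  have step : ∀ S : Set (ℕ → ℕ), c < μ (f '' S) → ∀ n : ℕ, ∃ k : ℕ,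
      c < μ (f '' (S ∩ {σ | σ n ≤ k})) := by
    intro S hS n
    have hU : f '' S = ⋃ k : ℕ, f '' (S ∩ {σ | σ n ≤ k}) := by
      rw [← image_iUnion, ← inter_iUnion]
      congr 1
      ext σ
      simp only [mem_inter_iff, mem_iUnion, mem_ofPred_eq]
      exact ⟨fun h => ⟨h, σ n, le_rfl⟩, fun h => h.1⟩
    have hmono : Monotone fun k : ℕ => f '' (S ∩ {σ | σ n ≤ k}) := by
      intro a b hab
      exact image_mono (inter_subset_inter_right _ fun σ (h : σ n ≤ a) => h.trans hab)
    rw [hU, hmono.measure_iUnion, lt_iSup_iff] at hS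
    exact hS
  choose! k hk using step
  let T : ℕ → Set (ℕ → ℕ) := fun n => Nat.rec univ (fun n S => S ∩ {σ | σ n ≤ k S n}) n
  have hT : ∀ n, c < μ (f '' T n) := by
    intro n
    induction n with
    | zero => simpa [T] using hc
    | succ n ih => exact hk _ ih n
  let b : ℕ → ℕ := fun n => k (T n) n
  have hTmem : ∀ n σ, σ ∈ T n ↔ ∀ i < n, σ i ≤ b i := by
    intro n σ
    induction n with
    | zero => simp [T]
    | succ n ih =>
      change (σ ∈ T n ∧ σ n ≤ b n) ↔ _
      rw [ih, Nat.forall_lt_succ_right]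
  have hK : IsCompact (Set.univ.pi fun i => Set.Iic (b i)) :=
    isCompact_univ_pi fun i => (Set.finite_Iic (b i)).isCompact
  refine ⟨f '' (Set.univ.pi fun i => Set.Iic (b i)), hK.image hf, image_subset_range _ _, ?_⟩
  by_contra! hlt
  obtain ⟨U, hKU, hUo, hU⟩ := Set.exists_isOpen_lt_of_lt _ _ hlt
  have hne : ∀ n, ∃ σ ∈ T n, f σ ∉ U := by
    intro n
    by_contra! h
    exact absurd ((hT n).trans_le (measure_mono (image_subset_iff.2 h))) (not_lt.2 hU.le)
  choose σ hσT hσU using hne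
  -- Truncating `σ n` by the bounds `b` lands in the compact box and changes no coordinate
  -- of index below `n`.
  obtain ⟨τ, hτ, φ, hφ, hlim⟩ := hK.tendsto_subseq (x := fun n i => min (σ n i) (b i))
    fun n i _ => mem_Iic.2 (min_le_right _ _)
  have hlim' : Tendsto (σ ∘ φ) atTop (𝓝 τ) := by
    rw [tendsto_pi_nhds] at hlim ⊢
    intro i
    refine (hlim i).congr' ?_
    filter_upwards [eventually_gt_atTop i] with n hn
    exact min_eq_left ((hTmem _ _).1 (hσT (φ n)) i (hn.trans_le (hφ.id_le n)))
  -- The complement of `U` is closed, so `f τ ∉ U` although `τ` lies in the box.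
  have hclosed : f τ ∈ Uᶜ :=
    hUo.isClosed_compl.mem_of_tendsto ((hf.tendsto τ).comp hlim')
      (Eventually.of_forall fun n => hσU (φ n))
  exact hclosed (hKU (mem_image_of_mem f hτ))

/-- Analytic sets are universally measurable. -/
theorem nullMeasurableSet_of_analyticSet {X : Type*} [MetricSpace X]
    [MeasurableSpace X] [BorelSpace X] [PolishSpace X] (μ : Measure X) [IsLocallyFiniteMeasure μ]
    {A : Set X} (hA : AnalyticSet A) : NullMeasurableSet A μ := by
  have finite_case : ∀ B : Set X, AnalyticSet B → μ B ≠ ⊤ → NullMeasurableSet B μ := by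
    intro B hB hfin
    rw [AnalyticSet] at hB
    rcases hB with rfl | ⟨f, hf, rfl⟩
    · exact nullMeasurableSet_empty
    rcases eq_or_ne (μ (range f)) 0 with h0 | h0
    · exact NullMeasurableSet.of_null h0
    obtain ⟨c, -, hc, hclim⟩ := exists_seq_strictMono_tendsto' (pos_iff_ne_zero.2 h0)
    choose K hKc hKs hcK using fun n =>
      exists_isCompact_image_measure_ge μ hf (hc n).2
    have hKm : MeasurableSet (⋃ n, K n) := .iUnion fun n => (hKc n).measurableSet
    have hsub : (⋃ n, K n) ⊆ range f := iUnion_subset hKs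
    have hge : μ (range f) ≤ μ (⋃ n, K n) :=
      le_of_tendsto' hclim fun n => (hcK n).trans (measure_mono (subset_iUnion K n))
    have := ae_eq_of_subset_of_measure_ge hsub hge hKm.nullMeasurableSet hfin
    exact hKm.nullMeasurableSet.congr this
  have hcover : A = ⋃ n, A ∩ spanningSets μ n := by
    rw [← inter_iUnion, iUnion_spanningSets, inter_univ]
  rw [hcover]
  refine .iUnion fun n => finite_case _ ?_ ?_
  · have := (measurableSet_spanningSets μ n).analyticSet
    rw [inter_eq_iInter]
    exact .iInter fun b => by cases b <;> assumption
  · exact ((measure_mono inter_subset_right).trans_lt (measure_spanningSets_lt_top μ n)).ne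

/-! ### The relation `∼_ρ` and the measurability of its classes -/

/-- The case `x = y` in `RhoRel` is witnessed by the constant curve with `L = 0`, so it needs no
separate treatment. -/
theorem RhoRel.exists_curve {X : Type*} [MetricSpace X] {ρ : X → ℝ≥0∞} {x y : X}
    (h : RhoRel ρ x y) : ∃ L : ℝ, 0 ≤ L ∧ ∃ γ : ℝ → X, LipschitzOnWith 1 γ (Set.Icc 0 L) ∧
    γ 0 = x ∧ γ L = y ∧ (∫⁻ t in Set.Icc 0 L, ρ (γ t)) < ⊤ := by
  rcases h with rfl | h
  · exact ⟨0, le_rfl, fun _ => x, (LipschitzWith.const x).lipschitzOnWith.weaken zero_le_one, rfl, rfl, by simp⟩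
  · exact h

/-- A connecting curve is traversed backwards. -/
theorem RhoRel.symm {X : Type*} [MetricSpace X] {ρ : X → ℝ≥0∞} {x y : X}
    (h : RhoRel ρ x y) : RhoRel ρ y x := by
  obtain ⟨L, hL, γ, hγ, h0, h1, hfin⟩ := h.exists_curve
  refine Or.inr ⟨L, hL, fun t => γ (L - t), ?_, by simpa using h1, by simpa using h0, ?_⟩
  · refine LipschitzOnWith.of_dist_le_mul fun s hs t ht => ?_
    have := hγ.dist_le_mul (L - s) ⟨by linarith [hs.2], by linarith [hs.1]⟩ (L - t)
      ⟨by linarith [ht.2], by linarith [ht.1]⟩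
    rwa [dist_sub_left] at this
  · refine lt_of_eq_of_lt ?_ hfin
    rw [← lintegral_indicator measurableSet_Icc, ← lintegral_indicator measurableSet_Icc,
      ← lintegral_sub_left_eq_self _ L]
    refine lintegral_congr fun t => ?_
    simp only [indicator, mem_Icc, sub_nonneg, sub_le_self_iff, sub_sub_cancel]
    simp only [and_comm]

/-- Two connecting curves are concatenated. -/
theorem RhoRel.trans {X : Type*} [MetricSpace X] {ρ : X → ℝ≥0∞} {x y z : X}
    (hxy : RhoRel ρ x y) (hyz : RhoRel ρ y z) : RhoRel ρ x z := by
  obtain ⟨L, hL, γ, hγ, hγ0, hγ1, hγfin⟩ := hxy.exists_curve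
  obtain ⟨M, hM, δ, hδ, hδ0, hδ1, hδfin⟩ := hyz.exists_curve
  -- At the junction `t = L` the two branches agree, because `δ 0 = y = γ L`.
  have hη : ∀ t, L ≤ t → (if t ≤ L then γ t else δ (t - L)) = δ (t - L) := by
    intro t ht
    split_ifs with h
    · obtain rfl := le_antisymm h ht
      rw [sub_self, hδ0, hγ1]
    · rfl
  refine Or.inr ⟨L + M, by positivity, fun t => if t ≤ L then γ t else δ (t - L), ?_, ?_, ?_, ?_⟩
  · refine LipschitzOnWith.of_dist_le_mul fun s hs t ht => ?_
    wlog hst : s ≤ t generalizing s t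
    · rw [dist_comm, dist_comm s]
      exact this t ht s hs (le_of_not_ge hst)
    rw [NNReal.coe_one, one_mul, dist_comm s t, Real.dist_eq, abs_of_nonneg (sub_nonneg.2 hst)]
    have hγ' : ∀ a b, 0 ≤ a → a ≤ b → b ≤ L → dist (γ a) (γ b) ≤ b - a := by
      intro a b ha hab hb
      have := hγ.dist_le_mul a ⟨ha, hab.trans hb⟩ b ⟨ha.trans hab, hb⟩
      rwa [NNReal.coe_one, one_mul, dist_comm a b, Real.dist_eq,
        abs_of_nonneg (sub_nonneg.2 hab)] at this
    have hδ' : ∀ a b, L ≤ a → a ≤ b → b ≤ L + M → dist (δ (a - L)) (δ (b - L)) ≤ b - a := by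
      intro a b ha hab hb
      have := hδ.dist_le_mul (a - L) ⟨by linarith, by linarith⟩ (b - L)
        ⟨by linarith, by linarith⟩
      rwa [NNReal.coe_one, one_mul, dist_sub_right, dist_comm a b, Real.dist_eq,
        abs_of_nonneg (sub_nonneg.2 hab)] at this
    rcases le_total t L with htL | htL
    · simp only [htL, hst.trans htL, if_true]
      exact hγ' s t hs.1 hst htL
    · rcases le_total s L with hsL | hsL
      · simp only [hη t htL, hsL, if_true]
        have h1 := hγ' s L hs.1 hsL le_rfl
        have h2 := hδ' L t le_rfl htL ht.2
        rw [sub_self, hδ0, ← hγ1] at h2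
        linarith [dist_triangle (γ s) (γ L) (δ (t - L))]
      · simp only [hη t htL, hη s hsL]
        exact hδ' s t hsL hst ht.2
  · simp [hL, hγ0]
  · simp only
    rw [hη _ (by linarith), add_sub_cancel_left, hδ1]
  · have hsplit : Icc 0 (L + M) ⊆ Icc 0 L ∪ Icc L (L + M) := fun t ht => by
      rcases le_total t L with h | h
      exacts [Or.inl ⟨ht.1, h⟩, Or.inr ⟨h, ht.2⟩]
    refine (lintegral_mono_set hsplit).trans_lt ((lintegral_union_le _ _ _).trans_lt ?_)
    refine ENNReal.add_lt_top.2 ⟨?_, ?_⟩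
    · refine lt_of_eq_of_lt (setLIntegral_congr_fun measurableSet_Icc fun t ht => ?_) hγfin
      simp [ht.2]
    · refine lt_of_eq_of_lt ?_ hδfin
      rw [setLIntegral_congr_fun (g := fun t => ρ (δ (t - L))) measurableSet_Icc
        fun t ht => by simp only [hη t ht.1]]
      rw [← lintegral_indicator measurableSet_Icc, ← lintegral_indicator measurableSet_Icc,
        ← lintegral_sub_right_eq_self ((Icc 0 M).indicator fun t => ρ (δ t)) L]
      refine lintegral_congr fun t => ?_
      simp only [indicator, mem_Icc, sub_nonneg, sub_le_iff_le_add']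

/-- The classes of `∼_ρ` are analytic sets, as images of Borel sets of curves under evaluation at the
endpoint. -/
theorem analyticSet_setOf_rhoRel {X : Type*} [MetricSpace X] [MeasurableSpace X] [BorelSpace X]
    [ProperSpace X] {ρ : X → ℝ≥0∞} (hρ : Measurable ρ) (x₀ : X) :
    AnalyticSet {y : X | RhoRel ρ x₀ y} := by
  borelize C(ℝ, X)
  have : PolishSpace C(ℝ, X) := inferInstance
  let P : Set (C(ℝ, X) × ℝ) := {q | 0 ≤ q.2 ∧ LipschitzWith 1 q.1 ∧ q.1 0 = x₀ ∧
    (∫⁻ t in Icc 0 q.2, ρ (q.1 t)) < ⊤}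
  have hP : MeasurableSet P := by
    have h1 : MeasurableSet {q : C(ℝ, X) × ℝ | 0 ≤ q.2} :=
      measurableSet_le measurable_const measurable_snd
    have h2 : IsClosed {q : C(ℝ, X) × ℝ | LipschitzWith 1 q.1} := by
      simp only [lipschitzWith_iff_dist_le_mul, ofPred_forall]
      refine isClosed_iInter fun s => isClosed_iInter fun t => isClosed_le ?_ continuous_const
      exact ((continuous_eval_const s).comp continuous_fst).dist
        ((continuous_eval_const t).comp continuous_fst)
    have h3 : IsClosed {q : C(ℝ, X) × ℝ | q.1 0 = x₀} :=
      isClosed_eq ((continuous_eval_const 0).comp continuous_fst) continuous_const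
    have h4 : Measurable fun q : C(ℝ, X) × ℝ => ∫⁻ t in Icc 0 q.2, ρ (q.1 t) := by
      have hev : Measurable fun z : (C(ℝ, X) × ℝ) × ℝ => ρ (z.1.1 z.2) :=
        hρ.comp (Continuous.measurable (by fun_prop))
      have hset : MeasurableSet {z : (C(ℝ, X) × ℝ) × ℝ | 0 ≤ z.2 ∧ z.2 ≤ z.1.2} :=
        (measurableSet_le measurable_const measurable_snd).inter
          (measurableSet_le measurable_snd (measurable_snd.comp measurable_fst))
      have := (hev.indicator hset).lintegral_prod_right' (ν := volume)
      convert this using 2 with q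
      rw [← lintegral_indicator measurableSet_Icc]
      rfl
    exact h1.inter (h2.measurableSet.inter
      (h3.measurableSet.inter (measurableSet_lt h4 measurable_const)))
  have himg : {y : X | RhoRel ρ x₀ y} = (fun q : C(ℝ, X) × ℝ => q.1 q.2) '' P := by
    ext y
    constructor
    · intro h
      obtain ⟨L, hL, γ, hγ, h0, h1, hfin⟩ := h.exists_curve
      -- The curve is extended to a `1`-Lipschitz map on `ℝ` by composing with the projection
      -- onto `[0, L]`.
      have hlip : LipschitzWith 1 fun t => γ (projIcc 0 L hL t) :=
        LipschitzWith.of_dist_le_mul fun s t =>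
          (hγ.dist_le_mul _ (projIcc 0 L hL s).2 _ (projIcc 0 L hL t).2).trans
            (mul_le_mul_of_nonneg_left (by simpa [Subtype.dist_eq] using (LipschitzWith.projIcc hL).dist_le_mul s t)
              zero_le_one)
      refine ⟨(⟨_, hlip.continuous⟩, L), ⟨hL, hlip, ?_, ?_⟩, ?_⟩
      · simpa using h0
      · refine lt_of_eq_of_lt (setLIntegral_congr_fun measurableSet_Icc fun t ht => ?_) hfin
        simp [projIcc_of_mem hL ht]
      · simpa using h1
    · rintro ⟨⟨γ, L⟩, ⟨hL, hlip, h0, hfin⟩, rfl⟩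
      exact Or.inr ⟨L, hL, γ, hlip.lipschitzOnWith, h0, rfl, hfin⟩
  rw [himg]
  exact hP.analyticSet.image_of_continuous (by fun_prop)

/-! ### The zero-one law -/

/-- Every positive multiple of `ρ` is an upper gradient of the indicator function of a class of
`∼_ρ`: along a curve with `∫ ρ < ∞` the indicator function takes equal values at both ends, and along
any other curve the integral of the multiple is infinite. -/
theorem isUpperGradient_indicator {X : Type*} [MetricSpace X] {ρ : X → ℝ≥0∞} (x₀ : X)
    {ε : ℝ≥0∞} (hε : ε ≠ 0) (hε' : ε ≠ ⊤) :
    IsUpperGradient (fun x => ε * ρ x) (indicator {y : X | RhoRel ρ x₀ y} fun _ => (1 : ℝ)) := by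
  intro L γ hL hγ
  rw [lintegral_const_mul' _ _ hε']
  rcases eq_or_ne (∫⁻ t in Icc 0 L, ρ (γ t)) ⊤ with htop | hfin
  · simp [htop, ENNReal.mul_top hε]
  · have hrel : RhoRel ρ (γ 0) (γ L) := Or.inr ⟨L, hL, γ, hγ, rfl, rfl, hfin.lt_top⟩
    have hiff : RhoRel ρ x₀ (γ 0) ↔ RhoRel ρ x₀ (γ L) :=
      ⟨fun h => h.trans hrel, fun h => h.trans hrel.symm⟩
    by_cases h : RhoRel ρ x₀ (γ L)
    · simp [indicator, hiff.2 h, h]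
    · simp [indicator, mt hiff.1 h, h]

/-- If the mean oscillation of the indicator function of `E` on a ball vanishes, then up to a null
set the ball is disjoint from `E` or contained in `E`. -/
theorem ball_dichotomy {X : Type*} [MetricSpace X] [MeasurableSpace X] [BorelSpace X]
    {μ : Measure X} {E : Set X} (hE : NullMeasurableSet E μ) {x : X} {r : ℝ}
    (hpos : 0 < μ (ball x r)) (hfin : μ (ball x r) < ⊤)
    (hosc : ⨍ y in ball x r, |E.indicator (fun _ => (1 : ℝ)) y -
      ⨍ z in ball x r, E.indicator (fun _ => (1 : ℝ)) z ∂μ| ∂μ = 0) :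
    μ (ball x r ∩ E) = 0 ∨ μ (ball x r ∩ Eᶜ) = 0 := by
  set c := ⨍ z in ball x r, E.indicator (fun _ => (1 : ℝ)) z ∂μ
  have : IsFiniteMeasure (μ.restrict (ball x r)) := ⟨by simpa using hfin⟩
  have hint : Integrable (E.indicator fun _ => (1 : ℝ)) (μ.restrict (ball x r)) :=
    (integrable_const (1 : ℝ)).indicator₀ (hE.mono_ac Measure.restrict_le_self.absolutelyContinuous)
  rw [setAverage_eq, smul_eq_zero, inv_eq_zero] at hosc
  have hne : μ.real (ball x r) ≠ 0 := (ENNReal.toReal_pos hpos.ne' hfin.ne).ne'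
  have h0 := (integral_eq_zero_iff_of_nonneg (fun _ => abs_nonneg _)
    (hint.sub (integrable_const c)).abs).1 (hosc.resolve_left hne)
  have hae : ∀ᵐ y ∂μ, y ∈ ball x r → E.indicator (fun _ => (1 : ℝ)) y = c := by
    refine (ae_restrict_iff' measurableSet_ball).1 (h0.mono fun y hy => ?_)
    exact sub_eq_zero.1 (abs_eq_zero.1 hy)
  rcases eq_or_ne c 1 with hc | hc
  · right
    rw [ae_iff] at hae
    refine measure_mono_null (fun y hy => ?_) hae
    rw [mem_ofPred_eq]
    intro h
    have := h hy.1
    rw [indicator_of_notMem hy.2, hc] at this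
    exact zero_ne_one this
  · left
    rw [ae_iff] at hae
    refine measure_mono_null (fun y hy => ?_) hae
    rw [mem_ofPred_eq]
    refine fun h => hc ?_
    rw [← h hy.1, indicator_of_mem hy.2]

/-- The set of centres whose `r`-ball meets `E` in a null set is clopen: two balls of radius `r` whose
centres are at distance less than `r` overlap in a set of positive measure, so they fall on the same
side of the dichotomy. Connectedness then gives the same alternative for every centre. -/
theorem null_or_conull_of_ball_dichotomy {X : Type*} [MetricSpace X] [MeasurableSpace X]
    [SecondCountableTopology X] [ConnectedSpace X] {μ : Measure X} {E : Set X}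
    (hpos : ∀ (x : X) (r : ℝ), 0 < r → 0 < μ (ball x r)) {r : ℝ} (hr : 0 < r)
    (h : ∀ x, μ (ball x r ∩ E) = 0 ∨ μ (ball x r ∩ Eᶜ) = 0) : μ E = 0 ∨ μ Eᶜ = 0 := by
  have hex : ∀ x y, dist x y < r → μ (ball x r ∩ E) = 0 → μ (ball y r ∩ Eᶜ) ≠ 0 := by
    intro x y hxy h1 h2
    refine (hpos x (r - dist x y) (by linarith)).ne' (measure_mono_null ?_ (measure_union_null h1 h2))
    intro z hz
    rw [mem_ball] at hz
    have hzx : z ∈ ball x r := by rw [mem_ball]; linarith [dist_nonneg (x := x) (y := y)]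
    have hzy : z ∈ ball y r := by rw [mem_ball]; linarith [dist_triangle z x y]
    by_cases hzE : z ∈ E
    exacts [Or.inl ⟨hzx, hzE⟩, Or.inr ⟨hzy, hzE⟩]
  have hclopen : IsClopen {x | μ (ball x r ∩ E) = 0} := by
    constructor
    · rw [← isOpen_compl_iff, Metric.isOpen_iff]
      refine fun x hx => ⟨r, hr, fun y hy hyS => ?_⟩
      exact hex y x hy hyS ((h x).resolve_left hx)
    · rw [Metric.isOpen_iff]
      refine fun x hx => ⟨r, hr, fun y hy => ?_⟩
      exact (h y).resolve_right (hex x y (by rwa [dist_comm]) hx)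
  have hloc : ∀ F : Set X, (∀ x, μ (ball x r ∩ F) = 0) → μ F = 0 := fun F hF =>
    measure_null_of_locally_null F fun x _ =>
      ⟨ball x r ∩ F, inter_mem (mem_nhdsWithin_of_mem_nhds (ball_mem_nhds x hr))
        self_mem_nhdsWithin, hF x⟩
  rcases isClopen_iff.1 hclopen with h0 | h0
  · refine Or.inr (hloc _ fun x => (h x).resolve_left fun hx => ?_)
    exact (h0 ▸ hx : x ∈ (∅ : Set X))
  · exact Or.inl (hloc _ fun x => (h0 ▸ mem_univ x : x ∈ {x | μ (ball x r ∩ E) = 0}))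

/-- under the standing assumptions and uniformly locally `p`-controlled
geometry, every `∼_ρ`-equivalence class `E` of a Borel `ρ : X → [0,∞]` with `∫ ρᵖ dμ < ∞` is
measurable with respect to the completion of `μ`, and if `μ(E) > 0` (as outer measure) then
`μ(X ∖ E) = 0`. -/
theorem statement15 {X : Type*} [MetricSpace X] [MeasurableSpace X] [BorelSpace X]
    [ProperSpace X] [ConnectedSpace X]
    (μ : Measure X) (hXinf : μ Set.univ = ⊤)
    (hball : ∀ (x : X) (r : ℝ), 0 < r → 0 < μ (ball x r) ∧ μ (ball x r) < ⊤)
    (p : ℝ) (hp : 1 ≤ p)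
    (hgeom : UniformlyLocallyControlledGeometry p μ)
    (ρ : X → ℝ≥0∞) (hρ : Measurable ρ) (hρp : (∫⁻ x, ρ x ^ p ∂μ) < ⊤)
    (E : Set X) (hE : ∃ x₀ : X, E = {y : X | RhoRel ρ x₀ y}) :
    NullMeasurableSet E μ ∧ (0 < μ E → μ Eᶜ = 0) := by
  obtain ⟨x₀, rfl⟩ := hE
  have : IsLocallyFiniteMeasure μ :=
    ⟨fun x => ⟨ball x 1, ball_mem_nhds x one_pos, (hball x 1 one_pos).2⟩⟩
  have hmeas : NullMeasurableSet {y : X | RhoRel ρ x₀ y} μ :=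
    nullMeasurableSet_of_analyticSet μ (analyticSet_setOf_rhoRel hρ x₀)
  refine ⟨hmeas, fun hEpos => ?_⟩
  obtain ⟨R₀, Cd, C, lam, hR₀, -, -, hlam, -, hPI⟩ := hgeom
  obtain ⟨r, hr, hrR⟩ : ∃ r : ℝ, 0 < r ∧ ENNReal.ofReal r < R₀ := by
    obtain ⟨q, hq0, hq⟩ := ENNReal.lt_iff_exists_nnreal_btwn.1 hR₀
    exact ⟨q, by exact_mod_cast hq0, by simpa using hq⟩
  have hp0 : 0 < p := by linarith
  have hint : LocallyIntegrable ({y : X | RhoRel ρ x₀ y}.indicator fun _ => (1 : ℝ)) μ := by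
    intro x
    have hfin : IsFiniteMeasure (μ.restrict (ball x 1)) :=
      ⟨by simpa using (hball x 1 one_pos).2⟩
    exact ⟨ball x 1, ball_mem_nhds x one_pos, (integrable_const (1 : ℝ)).indicator₀
      (hmeas.mono_ac Measure.restrict_le_self.absolutelyContinuous)⟩
  refine (null_or_conull_of_ball_dichotomy (fun x s hs => (hball x s hs).1) hr fun x =>
    ball_dichotomy hmeas (hball x r hr).1 (hball x r hr).2 ?_).resolve_left hEpos.ne'
  have hlr : 0 < lam * r := mul_pos hlam hr
  set I := ((∫⁻ y in ball x (lam * r), ρ y ^ p ∂μ) / μ (ball x (lam * r))) ^ (1 / p) with hI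
  have hIfin : I ≠ ⊤ := by
    refine ENNReal.rpow_ne_top_of_nonneg (by positivity) (ENNReal.div_ne_top ?_ (hball x _ hlr).1.ne')
    exact ((setLIntegral_le_lintegral _ _).trans_lt hρp).ne
  -- The Poincaré inequality for the upper gradient `ρ / n`, for every `n ≥ 1`.
  have hbound : ∀ n : ℕ, 0 < n → ENNReal.ofReal (⨍ y in ball x r,
      |{y : X | RhoRel ρ x₀ y}.indicator (fun _ => (1 : ℝ)) y -
        ⨍ z in ball x r, {y : X | RhoRel ρ x₀ y}.indicator (fun _ => (1 : ℝ)) z ∂μ| ∂μ) ≤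
      ENNReal.ofReal (C * r) * ((n : ℝ≥0∞)⁻¹ * I) := by
    intro n hn
    have h0 : (n : ℝ≥0∞)⁻¹ ≠ 0 := by simp
    have h1 : (n : ℝ≥0∞)⁻¹ ≠ ⊤ := by simpa using hn.ne'
    refine (hPI _ _ hint (hρ.const_mul _) (isUpperGradient_indicator x₀ h0 h1) x r hr hrR).trans_eq ?_
    congr 1
    simp_rw [ENNReal.mul_rpow_of_nonneg _ _ hp0.le]
    rw [lintegral_const_mul' _ _ (ENNReal.rpow_ne_top_of_nonneg hp0.le h1), mul_div_assoc,
      ENNReal.mul_rpow_of_nonneg _ _ (by positivity), ← ENNReal.rpow_mul, mul_one_div_cancel hp0.ne',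
      ENNReal.rpow_one]
  have hlim : Tendsto (fun n : ℕ => ENNReal.ofReal (C * r) * ((n : ℝ≥0∞)⁻¹ * I)) atTop (𝓝 0) := by
    have := ENNReal.Tendsto.const_mul (a := ENNReal.ofReal (C * r)) (ENNReal.Tendsto.mul_const (b := I)
      ENNReal.tendsto_inv_nat_nhds_zero (Or.inr hIfin)) (Or.inr ENNReal.ofReal_ne_top)
    simpa using this
  have hzero := ge_of_tendsto hlim ((eventually_gt_atTop 0).mono hbound)
  refine le_antisymm (ENNReal.ofReal_eq_zero.1 (le_zero_iff.1 hzero)) ?_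
  rw [setAverage_eq, smul_eq_mul]
  exact mul_nonneg (by positivity) (integral_nonneg fun _ => abs_nonneg _)
end

section
/- Let 1 ≤ p < ∞ and let (X,d,μ) satisfy the standing assumptions and be of uniformly locally p-controlled geometry. Let ρ : X → [0,∞] be a Borel function with ∫_X ρ^p dμ < ∞. Then there exists an equivalence class E of the relation ∼_ρ with μ(E) > 0 (as outer measure). -/
/-!
The proof fixes one good point `x₀` and shows that its `∼_ρ`-class contains almost every point of a
small ball `B(x₀, r)`.

By the Vitali–Carathéodory theorem `ρ ^ p` has an integrable lower semicontinuous majorant `g`; put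
`G = (g + 1) ^ (1 / p)`, so that `G` is lower semicontinuous, `ρ ≤ G` and `1 ≤ G`. By Lebesgue
differentiation there is a point `x₀` around which the averages of `g` over small balls stay bounded
(`exists_point_lintegral_closedBall_le`).

Let `fᵢ ≤ G` be bounded Lipschitz functions increasing to `G` (`infConv`), and let `uᵢ(x)` be the
infimal cost `∑ fᵢ(xₖ) d(xₖ, xₖ₊₁)` of chains from `x₀` to `x` with steps of length at most
`1 / (i + 1)` (`chainDist`). Since `X` is connected, `uᵢ` is finite; it is continuous, vanishes at
`x₀`, and has `fᵢ` as an upper gradient (`isUpperGradient_chainDist`). Using chains rather than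
curves gives continuity without any quasiconvexity of `X`. The Poincaré inequality and telescoping
over the balls `B(x₀, 2⁻ᵏ r)` (`average_sub_center_le`) bound the average of `uᵢ` over `B(x₀, r)` by
a constant independent of `i`, because the upper gradients are all dominated by `G`. By Fatou's
lemma, `liminf uᵢ(x) < ∞` for almost every `x` in `B(x₀, r)`.

For such an `x`, infinitely many of the `uᵢ(x)` stay below some `N`. The corresponding chains,
parametrised as step curves of length at most `N` (`ChainReach.exists_curve`, using `fᵢ ≥ 1`),
subconverge to a `1`-Lipschitz curve from `x₀` to `x` along which `G`, hence `ρ`, has integral at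
most `N`, by lower semicontinuity and Fatou's lemma again (`exists_limit_curve`). Thus `x₀ ∼_ρ x`.
-/

open MeasureTheory Metric Set Filter
open scoped ENNReal NNReal Topology

/-! ### Lipschitz regularisation of a lower semicontinuous function -/

/-- The `n`-th inf-convolution of the truncation `min G n`; it is finite, `n`-Lipschitz, and
increases to `G` when `G` is lower semicontinuous. -/
noncomputable def infConv {X : Type*} [MetricSpace X] (G : X → ℝ≥0∞) (n : ℕ) (x : X) : ℝ≥0∞ :=
  ⨅ y, (min (G y) n + n * edist x y)

section InfConv
variable {X : Type*} [MetricSpace X] {G : X → ℝ≥0∞}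

lemma infConv_le_min (n : ℕ) (x : X) : infConv G n x ≤ min (G x) n :=
  (iInf_le _ x).trans (by simp)

lemma infConv_ne_top (n : ℕ) (x : X) : infConv G n x ≠ ⊤ :=
  ne_top_of_le_ne_top (ENNReal.natCast_ne_top n) ((infConv_le_min n x).trans (min_le_right _ _))

lemma one_le_infConv (hG : ∀ x, 1 ≤ G x) {n : ℕ} (hn : 1 ≤ n) (x : X) : 1 ≤ infConv G n x :=
  le_iInf fun y => le_add_right (le_min (hG y) (by exact_mod_cast hn))

lemma infConv_le_add (n : ℕ) (x y : X) : infConv G n x ≤ infConv G n y + n * edist x y := by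
  unfold infConv
  rw [ENNReal.iInf_add]
  refine le_iInf fun z => (iInf_le _ z).trans ?_
  rw [add_assoc, ← mul_add, add_comm (edist y z)]
  gcongr
  exact edist_triangle _ _ _

lemma continuous_infConv_toReal (n : ℕ) : Continuous fun x => (infConv G n x).toReal := by
  refine (LipschitzWith.of_le_add_mul (n : ℝ≥0) fun x y => ?_).continuous
  have h := ENNReal.toReal_mono
    (by finiteness [infConv_ne_top (G := G) n y, edist_ne_top x y]) (infConv_le_add (G := G) n x y)
  rw [ENNReal.toReal_add (infConv_ne_top n y) (by finiteness [edist_ne_top x y]),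
    ENNReal.toReal_mul, ← dist_edist] at h
  simpa using h

/-- The regularisations are asymptotically no smaller than `G`, even along moving points. -/
lemma le_liminf_infConv (hG : LowerSemicontinuous G) {n : ℕ → ℕ} (hn : Tendsto n atTop atTop)
    {z : ℕ → X} {z₀ : X} (hz : Tendsto z atTop (𝓝 z₀)) :
    G z₀ ≤ liminf (fun k => infConv G (n k) (z k)) atTop := by
  refine le_of_forall_lt fun c hc => ?_
  obtain ⟨c', hcc', hc'⟩ := exists_between hc
  refine hcc'.trans_le (le_liminf_of_le (by isBoundedDefault) ?_)
  obtain ⟨r, hr, hball⟩ := Metric.eventually_nhds_iff_ball.1 (hG z₀ c' hc')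
  have hctop : c' ≠ ⊤ := hc'.ne_top
  obtain ⟨N, hN⟩ := exists_nat_ge (max c'.toReal (c'.toReal / (r / 2)))
  have hN1 : c' ≤ N := by
    rw [← ENNReal.ofReal_toReal hctop, ← ENNReal.ofReal_natCast]
    exact ENNReal.ofReal_le_ofReal ((le_max_left _ _).trans hN)
  have hN2 : c' ≤ N * ENNReal.ofReal (r / 2) := by
    rw [← ENNReal.ofReal_toReal hctop, ← ENNReal.ofReal_natCast,
      ← ENNReal.ofReal_mul (by positivity)]
    exact ENNReal.ofReal_le_ofReal
      ((div_le_iff₀ (by positivity)).1 ((le_max_right _ _).trans hN))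
  filter_upwards [hn.eventually_ge_atTop N, hz.eventually (ball_mem_nhds z₀ (half_pos hr))]
    with k hk hzk
  have hk' : (N : ℝ≥0∞) ≤ (n k : ℝ≥0∞) := by exact_mod_cast hk
  refine le_iInf fun y => ?_
  by_cases hy : y ∈ ball z₀ r
  · exact le_add_right (le_min (hball y hy).le (hN1.trans hk'))
  · refine le_add_left (hN2.trans ?_)
    gcongr
    rw [edist_dist]
    refine ENNReal.ofReal_le_ofReal ?_
    have h1 : dist (z k) z₀ < r / 2 := hzk
    have h2 : r ≤ dist y z₀ := by simpa using hy
    have := dist_triangle_left y z₀ (z k)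
    linarith

end InfConv

/-! ### Discrete chains and the associated distance -/

/-- `ChainReach f ε x₀ x c`: there is a finite chain from `x₀` to `x` with steps of length at
most `ε` and cost `∑ f (xₖ) d(xₖ, xₖ₊₁) = c`. -/
inductive ChainReach {X : Type*} [MetricSpace X] (f : X → ℝ) (ε : ℝ) (x₀ : X) : X → ℝ → Prop
  | nil : ChainReach f ε x₀ x₀ 0
  | step {x y : X} {c : ℝ} : ChainReach f ε x₀ x c → dist x y ≤ ε →
      ChainReach f ε x₀ y (c + f x * dist x y)

/-- The infimal cost of an `ε`-chain from `x₀` to `x`. -/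
noncomputable def chainDist {X : Type*} [MetricSpace X] (f : X → ℝ) (ε : ℝ) (x₀ x : X) : ℝ :=
  sInf {c | ChainReach f ε x₀ x c}

section Chain
variable {X : Type*} [MetricSpace X] {f : X → ℝ} {ε : ℝ} {x₀ : X}

lemma ChainReach.nonneg (hf : ∀ x, 0 ≤ f x) {x : X} {c : ℝ} (h : ChainReach f ε x₀ x c) :
    0 ≤ c := by
  induction h with
  | nil => exact le_rfl
  | step _ _ ih => exact add_nonneg ih (mul_nonneg (hf _) dist_nonneg)

lemma exists_chainReach [PreconnectedSpace X] (hε : 0 < ε) (x : X) :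
    ∃ c, ChainReach f ε x₀ x c := by
  have hcl : IsClopen {x | ∃ c, ChainReach f ε x₀ x c} := by
    refine ⟨⟨?_⟩, ?_⟩
    · refine Metric.isOpen_iff.2 fun y hy => ⟨ε, hε, fun z hz ⟨c, hc⟩ => hy ?_⟩
      exact ⟨_, hc.step (y := y) (mem_ball.1 hz).le⟩
    · refine Metric.isOpen_iff.2 fun y ⟨c, hc⟩ => ⟨ε, hε, fun z hz => ?_⟩
      exact ⟨_, hc.step (y := z) (mem_ball'.1 hz).le⟩
  exact (hcl.eq_univ ⟨x₀, 0, .nil⟩).ge (mem_univ x)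

lemma bddBelow_chain (hf : ∀ x, 0 ≤ f x) (x : X) : BddBelow {c | ChainReach f ε x₀ x c} :=
  ⟨0, fun _ hc => ChainReach.nonneg hf hc⟩

lemma chainDist_nonneg (hf : ∀ x, 0 ≤ f x) (x : X) : 0 ≤ chainDist f ε x₀ x :=
  Real.sInf_nonneg fun _ hc => ChainReach.nonneg hf hc

lemma chainDist_self (hf : ∀ x, 0 ≤ f x) : chainDist f ε x₀ x₀ = 0 :=
  le_antisymm (csInf_le (bddBelow_chain hf _) .nil) (chainDist_nonneg hf _)

lemma chainDist_le_add [PreconnectedSpace X] (hf : ∀ x, 0 ≤ f x) (hε : 0 < ε) {x y : X}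
    (h : dist x y ≤ ε) : chainDist f ε x₀ y ≤ chainDist f ε x₀ x + f x * dist x y := by
  rw [← sub_le_iff_le_add]
  refine le_csInf (exists_chainReach hε x) fun c hc => ?_
  rw [sub_le_iff_le_add]
  exact csInf_le (bddBelow_chain hf _) (ChainReach.step hc h)

lemma exists_chain_lt [PreconnectedSpace X] (hε : 0 < ε) {x : X} {N : ℝ}
    (h : chainDist f ε x₀ x < N) : ∃ c < N, ChainReach f ε x₀ x c := by
  obtain ⟨c, hc, hlt⟩ := exists_lt_of_csInf_lt (exists_chainReach hε x) h
  exact ⟨c, hlt, hc⟩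

lemma continuous_chainDist [PreconnectedSpace X] (hf : ∀ x, 0 ≤ f x) (hfc : Continuous f)
    (hε : 0 < ε) : Continuous (chainDist f ε x₀) := by
  refine continuous_iff_continuousAt.2 fun x => ?_
  have hd : Tendsto (fun y => dist x y) (𝓝 x) (𝓝 0) := by
    have : Continuous fun y => dist x y := by fun_prop
    simpa using this.tendsto x
  have hle : ∀ᶠ y in 𝓝 x, dist x y ≤ ε := hd.eventually_le_const hε
  refine tendsto_of_tendsto_of_tendsto_of_le_of_le'
    (g := fun y => chainDist f ε x₀ x - f y * dist x y)
    (h := fun y => chainDist f ε x₀ x + f x * dist x y) ?_ ?_ ?_ ?_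
  · simpa using tendsto_const_nhds.sub (hfc.continuousAt.tendsto.mul hd)
  · simpa using tendsto_const_nhds.add (hd.const_mul (f x))
  · filter_upwards [hle] with y hy
    have := chainDist_le_add (x₀ := x₀) hf hε (x := y) (y := x) (by rwa [dist_comm])
    rw [dist_comm] at this
    linarith
  · filter_upwards [hle] with y hy
    exact chainDist_le_add hf hε hy

/-- A function on the line whose local growth is controlled by `φ` grows by at most `∫ φ`. -/
lemma sub_le_integral_of_local {F φ : ℝ → ℝ} (hF : Continuous F) (hφ : Continuous φ) (hε : 0 < ε)
    (h : ∀ s t, |s - t| ≤ ε → F t - F s ≤ max (φ s) (φ t) * |s - t|) {L : ℝ} (hL : 0 ≤ L) :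
    F L - F 0 ≤ ∫ t in (0 : ℝ)..L, φ t := by
  have hder : ∀ x, HasDerivAt (fun x => F 0 + ∫ t in (0 : ℝ)..x, φ t) (φ x) x := fun x =>
    (hφ.integral_hasStrictDerivAt 0 x).hasDerivAt.const_add (F 0)
  have := image_le_of_liminf_slope_right_le_deriv_boundary (f := F) (a := 0) (b := L)
    hF.continuousOn (B := fun x => F 0 + ∫ t in (0 : ℝ)..x, φ t) (B' := φ) (by simp)
    (fun x _ => (hder x).continuousAt.continuousWithinAt)
    (fun x _ => (hder x).hasDerivWithinAt) (fun x _ r hr => ?_) (right_mem_Icc.2 hL)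
  · linarith
  · have h1 : ∀ᶠ z in 𝓝 x, φ z < r := hφ.continuousAt.eventually_lt_const hr
    have h2 : ∀ᶠ z in 𝓝 x, |x - z| ≤ ε := by
      have : Continuous fun z => |x - z| := by fun_prop
      exact (this.tendsto x).eventually_le_const (by simpa using hε)
    refine Eventually.frequently ?_
    filter_upwards [nhdsWithin_le_nhds h1, nhdsWithin_le_nhds h2, self_mem_nhdsWithin]
      with z hz1 hz2 hz3
    have hz : 0 < z - x := sub_pos.2 hz3
    rw [slope_def_field, div_lt_iff₀ hz]
    refine (h x z hz2).trans_lt ?_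
    rw [abs_sub_comm, abs_of_pos hz]
    exact mul_lt_mul_of_pos_right (max_lt hr hz1) hz

lemma isUpperGradient_chainDist [PreconnectedSpace X] (hf : ∀ x, 0 ≤ f x) (hfc : Continuous f)
    (hε : 0 < ε) : IsUpperGradient (fun x => ENNReal.ofReal (f x)) (chainDist f ε x₀) := by
  intro L γ hL hγ
  -- extend the curve to the whole line by constants
  set η : ℝ → X := fun t => γ (projIcc 0 L hL t) with hη
  have hηL : LipschitzWith 1 η := by
    have := (lipschitzOnWith_iff_restrict.1 hγ).comp (LipschitzWith.projIcc hL)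
    simpa [Function.comp_def, Set.domRestrict] using this
  have hηeq : ∀ t ∈ Icc 0 L, η t = γ t := fun t ht => by simp [hη, projIcc_of_mem hL ht]
  have hηc : Continuous η := hηL.continuous
  have hφ : Continuous fun t => f (η t) := hfc.comp hηc
  have hF : Continuous fun t => chainDist f ε x₀ (η t) := (continuous_chainDist hf hfc hε).comp hηc
  have hdist : ∀ s t, dist (η s) (η t) ≤ |s - t| := fun s t => by
    simpa [Real.dist_eq] using hηL.dist_le_mul s t
  have hloc : ∀ s t, |s - t| ≤ ε → chainDist f ε x₀ (η t) - chainDist f ε x₀ (η s) ≤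
      f (η s) * |s - t| := fun s t hst => by
    have h1 := chainDist_le_add (x₀ := x₀) hf hε ((hdist s t).trans hst)
    have h2 := mul_le_mul_of_nonneg_left (hdist s t) (hf (η s))
    linarith
  have hA := sub_le_integral_of_local hF hφ hε (fun s t hst => (hloc s t hst).trans
    (mul_le_mul_of_nonneg_right (le_max_left _ _) (abs_nonneg _))) hL
  have hB := sub_le_integral_of_local hF.neg hφ hε (fun s t hst => by
    have h1 := hloc t s (by rwa [abs_sub_comm])
    rw [abs_sub_comm] at h1
    have h2 := mul_le_mul_of_nonneg_right (le_max_right (f (η s)) (f (η t))) (abs_nonneg (s - t))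
    simp only [Pi.neg_apply]
    linarith) hL
  have hI : ENNReal.ofReal (∫ t in (0 : ℝ)..L, f (η t)) =
      ∫⁻ t in Icc 0 L, ENNReal.ofReal (f (γ t)) := by
    rw [intervalIntegral.integral_of_le hL, ← integral_Icc_eq_integral_Ioc,
      ofReal_integral_eq_lintegral_ofReal (hφ.continuousOn.integrableOn_compact isCompact_Icc)
        (Eventually.of_forall fun t => hf _)]
    exact setLIntegral_congr_fun measurableSet_Icc fun t ht => by simp only [hηeq t ht]
  rw [← hI, ← hηeq L (right_mem_Icc.2 hL), ← hηeq 0 (left_mem_Icc.2 hL)]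
  refine ENNReal.ofReal_le_ofReal (abs_le'.2 ⟨hA, ?_⟩)
  simp only [Pi.neg_apply] at hB
  linarith

/-- A chain run through at unit speed is a step function that is `1`-Lipschitz up to the error
`ε`; the integral of `f` along it is at most the cost of the chain, which also bounds its length
when `1 ≤ f`. -/
lemma ChainReach.exists_curve [MeasurableSpace X] (hf : ∀ x, 1 ≤ f x) (hε : 0 ≤ ε) {x : X} {c : ℝ}
    (h : ChainReach f ε x₀ x c) :
    ∃ (L : ℝ) (γ : ℝ → X), 0 ≤ L ∧ L ≤ c ∧ Measurable γ ∧ (∀ t ≤ 0, γ t = x₀) ∧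
      (∀ t, L ≤ t → γ t = x) ∧ (∀ s t, s ≤ t → dist (γ s) (γ t) ≤ t - s + ε) ∧
      ∫⁻ t in Ico 0 L, ENNReal.ofReal (f (γ t)) ≤ ENNReal.ofReal c := by
  induction h with
  | nil =>
    refine ⟨0, fun _ => x₀, le_rfl, le_rfl, measurable_const, by simp, by simp, ?_, by simp⟩
    intro s t hst
    simp only [dist_self]
    linarith
  | @step x y c hc hxy ih =>
    obtain ⟨L, γ, hL, hLc, hm, h0, h1, hd, hint⟩ := ih
    have hdn : 0 ≤ dist x y := dist_nonneg
    have hfx := hf x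
    have hfd : dist x y ≤ f x * dist x y := le_mul_of_one_le_left hdn hfx
    refine ⟨L + dist x y, fun t => if t < L + dist x y then γ t else y, by positivity, by linarith,
      Measurable.ite measurableSet_Iio hm measurable_const, ?_, ?_, ?_, ?_⟩
    · intro t ht
      by_cases h : t < L + dist x y
      · simp [h, h0 t ht]
      · have hL0 : L = 0 := by linarith
        have hd0 : dist x y = 0 := by linarith
        simp only [h, if_false]
        rw [← dist_eq_zero.1 hd0, ← h1 0 hL0.le, h0 0 le_rfl]
    · intro t ht
      simp [not_lt.2 ht]
    · intro s t hst
      by_cases hs : s < L + dist x y <;> by_cases ht : t < L + dist x y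
      · simp only [hs, ht, if_true]
        exact hd s t hst
      · simp only [hs, ht, if_true, if_false]
        rcases le_total L s with hLs | hLs
        · rw [h1 s hLs]
          linarith
        · have h2 := hd s L hLs
          rw [h1 L le_rfl] at h2
          have := dist_triangle (γ s) x y
          linarith
      · exact absurd (hst.trans_lt ht) hs
      · simp only [hs, ht, if_false, dist_self]
        linarith
    · have heq : ∫⁻ t in Ico 0 (L + dist x y),
          ENNReal.ofReal (f (if t < L + dist x y then γ t else y)) =
          ∫⁻ t in Ico 0 (L + dist x y), ENNReal.ofReal (f (γ t)) :=
        setLIntegral_congr_fun measurableSet_Ico fun t ht => by simp [ht.2]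
      have h2 : ∫⁻ t in Ico L (L + dist x y), ENNReal.ofReal (f (γ t)) =
          ENNReal.ofReal (f x * dist x y) := by
        rw [setLIntegral_congr_fun (g := fun _ => ENNReal.ofReal (f x)) measurableSet_Ico
          fun t ht => by simp only [h1 t ht.1]]
        simp [ENNReal.ofReal_mul (zero_le_one.trans hfx)]
      rw [heq, ← Ico_union_Ico_eq_Ico hL (le_add_of_nonneg_right hdn)]
      refine (lintegral_union_le _ _ _).trans ?_
      rw [h2, ENNReal.ofReal_add (hL.trans hLc) (by linarith)]
      gcongr

end Chain

/-! ### Limits of step curves -/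

section Limit
variable {X : Type*} [MetricSpace X] {G : X → ℝ≥0∞}

lemma measurable_infConv [MeasurableSpace X] [BorelSpace X] (n : ℕ) :
    Measurable (infConv G n) := by
  have h := (continuous_infConv_toReal (G := G) n).measurable.ennreal_ofReal
  simpa only [ENNReal.ofReal_toReal (infConv_ne_top (G := G) n _)] using h

/-- Compactness: almost `1`-Lipschitz step curves of bounded length along which the
regularisations of `G` have bounded integrals subconverge pointwise to a `1`-Lipschitz curve along
which `G` has finite integral. -/
lemma exists_limit_curve [ProperSpace X] [MeasurableSpace X] [BorelSpace X]
    (hG : LowerSemicontinuous G) {x₀ x : X} {N : ℝ} {n : ℕ → ℕ} (hn : Tendsto n atTop atTop)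
    {ε : ℕ → ℝ} (hε0 : ∀ k, 0 ≤ ε k) (hε1 : ∀ k, ε k ≤ 1) (hε : Tendsto ε atTop (𝓝 0))
    {L : ℕ → ℝ} {γ : ℕ → ℝ → X} (hL : ∀ k, L k ∈ Icc 0 N) (hm : ∀ k, Measurable (γ k))
    (h0 : ∀ k, ∀ t ≤ 0, γ k t = x₀) (h1 : ∀ k t, L k ≤ t → γ k t = x)
    (hd : ∀ k s t, s ≤ t → dist (γ k s) (γ k t) ≤ t - s + ε k)
    (hint : ∀ k, ∫⁻ t in Ico 0 (L k), infConv G (n k) (γ k t) ≤ ENNReal.ofReal N) :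
    ∃ L : ℝ, 0 ≤ L ∧ ∃ γ : ℝ → X, LipschitzOnWith 1 γ (Set.Icc 0 L) ∧
      γ 0 = x₀ ∧ γ L = x ∧ (∫⁻ t in Set.Icc 0 L, G (γ t)) < ⊤ := by
  have hbd : ∀ k t, γ k t ∈ closedBall x₀ (N + 1) := by
    intro k t
    have hLk := hL k
    have h01 : ∀ t ∈ Icc 0 (L k), dist (γ k t) x₀ ≤ N + 1 := by
      intro t ht
      have := hd k 0 t ht.1
      rw [h0 k 0 le_rfl, dist_comm] at this
      linarith [hε1 k, ht.2, hLk.2]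
    rw [mem_closedBall]
    rcases le_total t 0 with ht | ht
    · rw [← h0 k 0 le_rfl, h0 k t ht, h0 k 0 le_rfl, dist_self]
      linarith [hLk.1, hLk.2]
    · rcases le_total t (L k) with ht' | ht'
      · exact h01 t ⟨ht, ht'⟩
      · rw [h1 k t ht', ← h1 k (L k) le_rfl]
        exact h01 _ ⟨hLk.1, le_rfl⟩
  -- extract a subsequence converging at all rational times, together with the lengths
  have hK : IsCompact ((Icc 0 N : Set ℝ) ×ˢ
      (Set.pi univ fun _ : ℚ => closedBall x₀ (N + 1) : Set (ℚ → X))) :=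
    isCompact_Icc.prod (isCompact_univ_pi fun _ => isCompact_closedBall _ _)
  obtain ⟨⟨Li, a⟩, hmem, φ, hφ, hlim⟩ := hK.tendsto_subseq
    (x := fun k => (L k, fun q : ℚ => γ k q)) fun k => ⟨hL k, fun q _ => hbd k q⟩
  have hLi : Tendsto (fun k => L (φ k)) atTop (𝓝 Li) := (continuous_fst.tendsto _).comp hlim
  have hq : ∀ q : ℚ, Tendsto (fun k => γ (φ k) q) atTop (𝓝 (a q)) := fun q =>
    (((continuous_apply q).comp continuous_snd).tendsto _).comp hlim
  have hLi0 : 0 ≤ Li := hmem.1.1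
  have hεφ : Tendsto (fun k => ε (φ k)) atTop (𝓝 0) := hε.comp hφ.tendsto_atTop
  -- the almost Lipschitz bound upgrades this to convergence at all times
  have hcauchy : ∀ t : ℝ, CauchySeq fun k => γ (φ k) t := by
    intro t
    refine Metric.cauchySeq_iff.2 fun e he => ?_
    obtain ⟨q, hq1, hq2⟩ := exists_rat_btwn (show t < t + e / 8 by linarith)
    have hev := (hεφ.eventually_lt_const (show (0 : ℝ) < e / 8 by linarith)).and
      ((hq q).eventually (ball_mem_nhds (a q) (show (0 : ℝ) < e / 8 by linarith)))
    obtain ⟨M, hM⟩ := eventually_atTop.1 hev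
    refine ⟨M, fun k hk m hkm => ?_⟩
    have hone : ∀ k ≥ M, dist (γ (φ k) t) (a q) < 3 * (e / 8) := by
      intro k hk
      obtain ⟨h2, h3⟩ := hM k hk
      have h4 := hd (φ k) t q hq1.le
      have h5 : dist (γ (φ k) q) (a q) < e / 8 := h3
      linarith [dist_triangle (γ (φ k) t) (γ (φ k) q) (a q)]
    linarith [dist_triangle_right (γ (φ k) t) (γ (φ m) t) (a q), hone k hk, hone m hkm]
  choose η hη using fun t => cauchySeq_tendsto_of_complete (hcauchy t)
  have hlip : ∀ s t, s ≤ t → dist (η s) (η t) ≤ t - s := by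
    intro s t hst
    refine le_of_tendsto_of_tendsto' ((hη s).dist (hη t)) (b := atTop)
      (g := fun k => t - s + ε (φ k)) ?_ fun k => hd _ s t hst
    simpa using hεφ.const_add (t - s)
  refine ⟨Li, hLi0, η, ?_, ?_, ?_, ?_⟩
  · refine (LipschitzWith.of_dist_le_mul fun s t => ?_).lipschitzOnWith
    rw [NNReal.coe_one, one_mul, Real.dist_eq]
    rcases le_total s t with h | h
    · rw [abs_sub_comm, abs_of_nonneg (sub_nonneg.2 h)]
      exact hlip s t h
    · rw [dist_comm, abs_of_nonneg (sub_nonneg.2 h)]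
      exact hlip t s h
  · refine tendsto_nhds_unique (hη 0) ?_
    simp [h0 _ 0 le_rfl]
  · refine tendsto_nhds_unique (hη Li) (tendsto_iff_dist_tendsto_zero.2 ?_)
    refine squeeze_zero (g := fun k => |L (φ k) - Li| + ε (φ k)) (fun _ => dist_nonneg)
      (fun k => ?_) ?_
    · rcases le_total (L (φ k)) Li with h | h
      · rw [h1 _ _ h, dist_self]
        exact add_nonneg (abs_nonneg _) (hε0 _)
      · have := hd (φ k) Li (L (φ k)) h
        rw [h1 _ _ le_rfl] at this
        rwa [abs_of_nonneg (sub_nonneg.2 h)]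
    · have h2 := (hLi.sub_const Li).abs.add hεφ
      simpa using h2
  · rw [← setLIntegral_congr Ico_ae_eq_Icc, ← lintegral_indicator measurableSet_Ico]
    set F : ℕ → ℝ → ℝ≥0∞ := fun k =>
      (Ico 0 (L (φ k))).indicator fun t => infConv G (n (φ k)) (γ (φ k) t) with hF
    have hle : ∀ t, (Ico 0 Li).indicator (fun t => G (η t)) t ≤
        liminf (fun k => F k t) atTop := by
      intro t
      by_cases ht : t ∈ Ico 0 Li
      · rw [indicator_of_mem ht]
        have heq : ∀ᶠ k in atTop, infConv G (n (φ k)) (γ (φ k) t) = F k t := by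
          filter_upwards [hLi.eventually_const_lt ht.2] with k hk
          simp only [hF]
          rw [indicator_of_mem (show t ∈ Ico 0 (L (φ k)) from ⟨ht.1, hk⟩)]
        rw [← liminf_congr heq]
        exact le_liminf_infConv hG (hn.comp hφ.tendsto_atTop) (hη t)
      · rw [indicator_of_notMem ht]
        exact zero_le
    calc ∫⁻ t, (Ico 0 Li).indicator (fun t => G (η t)) t
        ≤ ∫⁻ t, liminf (fun k => F k t) atTop := lintegral_mono hle
      _ ≤ liminf (fun k => ∫⁻ t, F k t) atTop := lintegral_liminf_le fun k =>
          ((measurable_infConv _).comp (hm _)).indicator measurableSet_Ico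
      _ ≤ ENNReal.ofReal N := by
          refine liminf_le_of_le (by isBoundedDefault) fun b hb => ?_
          obtain ⟨k, hk⟩ := hb.exists
          refine hk.trans ?_
          simp only [hF]
          rw [lintegral_indicator measurableSet_Ico]
          exact hint _
      _ < ⊤ := ENNReal.ofReal_lt_top

end Limit

/-! ### Telescoping of averages -/

section Telescope
lemma abs_average_sub_le {X : Type*} [MeasurableSpace X] {μ : Measure X} {u : X → ℝ} {B' B : Set X} (hsub : B' ⊆ B)
    (hu : IntegrableOn u B μ) (hfin : μ B ≠ ⊤) (hpos : μ B' ≠ 0) {D : ℝ}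
    (hD : μ.real B ≤ D * μ.real B') (a : ℝ) :
    |⨍ y in B', u y ∂μ - a| ≤ D * ⨍ y in B, |u y - a| ∂μ := by
  have hfin' : μ B' ≠ ⊤ := ne_top_of_le_ne_top hfin (measure_mono hsub)
  have hp' : 0 < μ.real B' := ENNReal.toReal_pos hpos hfin'
  have hp : 0 < μ.real B := hp'.trans_le (measureReal_mono hsub hfin)
  have hconst : IntegrableOn (fun _ => a) B μ := integrableOn_const hfin
  have hconst' : IntegrableOn (fun _ => a) B' μ := integrableOn_const hfin'
  have hint : IntegrableOn (fun y => |u y - a|) B μ := (hu.sub hconst).abs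
  have e1 : ⨍ y in B', u y ∂μ - a = (μ.real B')⁻¹ * ∫ y in B', (u y - a) ∂μ := by
    rw [integral_sub (hu.mono_set hsub) hconst', setAverage_eq, setIntegral_const]
    simp only [smul_eq_mul]
    field_simp
  have h2 : |∫ y in B', (u y - a) ∂μ| ≤ ∫ y in B, |u y - a| ∂μ :=
    abs_integral_le_integral_abs.trans (setIntegral_mono_set hint
      (Eventually.of_forall fun _ => abs_nonneg _) hsub.eventuallyLE)
  have h3 : ∫ y in B, |u y - a| ∂μ = μ.real B * ⨍ y in B, |u y - a| ∂μ := by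
    rw [setAverage_eq, smul_eq_mul]
    field_simp
  have h4 : 0 ≤ ⨍ y in B, |u y - a| ∂μ := by
    rw [setAverage_eq, smul_eq_mul]
    exact mul_nonneg (by positivity) (integral_nonneg fun _ => abs_nonneg _)
  rw [e1, abs_mul, abs_of_pos (inv_pos.2 hp'), inv_mul_le_iff₀ hp']
  calc _ ≤ _ := h2
    _ = _ := h3
    _ ≤ D * μ.real B' * ⨍ y in B, |u y - a| ∂μ := by gcongr
    _ = _ := by ring

variable {X : Type*} [MetricSpace X] [MeasurableSpace X] [BorelSpace X] {μ : Measure X}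

/-- If the mean oscillations of a continuous function over the balls `B(x₀, 2⁻ᵏ r)` decay
geometrically, then its average over the largest ball is close to its value at the centre. -/
lemma average_sub_center_le [ProperSpace X] [IsLocallyFiniteMeasure μ] {u : X → ℝ}
    (hu : Continuous u) {x₀ : X} {r D E : ℝ} (hr : 0 < r) (hD0 : 0 ≤ D)
    (hpos : ∀ s, 0 < s → μ (ball x₀ s) ≠ 0)
    (hD : ∀ k : ℕ, μ.real (ball x₀ (r / 2 ^ k)) ≤ D * μ.real (ball x₀ (r / 2 ^ (k + 1))))
    (hE : ∀ k : ℕ, ⨍ y in ball x₀ (r / 2 ^ k), |u y - ⨍ z in ball x₀ (r / 2 ^ k), u z ∂μ| ∂μ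
      ≤ E / 2 ^ k) :
    |⨍ y in ball x₀ r, u y ∂μ - u x₀| ≤ 2 * (D * E) := by
  have hfin : ∀ s, μ (ball x₀ s) ≠ ⊤ := fun s => measure_ball_lt_top.ne
  have hint : ∀ s, IntegrableOn u (ball x₀ s) μ := fun s =>
    (hu.continuousOn.integrableOn_compact (isCompact_closedBall x₀ s)).mono_set
      ball_subset_closedBall
  set a : ℕ → ℝ := fun k => ⨍ y in ball x₀ (r / 2 ^ k), u y ∂μ with ha
  have hrk : ∀ k : ℕ, 0 < r / 2 ^ k := fun k => by positivity
  have hstep : ∀ k, dist (a k) (a (k + 1)) ≤ 2 * (D * E) / 2 / 2 ^ k := by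
    intro k
    rw [dist_comm, Real.dist_eq]
    refine (abs_average_sub_le (ball_subset_ball ?_) (hint _) (hfin _)
      (hpos _ (hrk _)) (hD k) (a k)).trans ?_
    · gcongr <;> simp
    · calc _ ≤ D * (E / 2 ^ k) := mul_le_mul_of_nonneg_left (hE k) hD0
        _ = _ := by ring
  have hr0 : Tendsto (fun k : ℕ => r / 2 ^ k) atTop (𝓝 0) := by
    have := (tendsto_pow_atTop_nhds_zero_of_lt_one (r := (1 / 2 : ℝ)) (by norm_num)
      (by norm_num)).const_mul r
    simpa [div_eq_mul_inv] using this
  have hlim : Tendsto a atTop (𝓝 (u x₀)) := by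
    refine (nhds_basis_closedBall.tendsto_right_iff).2 fun e he => ?_
    obtain ⟨s, hs, hsub⟩ := Metric.mem_nhds_iff.1
      (hu.continuousAt.preimage_mem_nhds (closedBall_mem_nhds (u x₀) he))
    filter_upwards [hr0.eventually_lt_const hs] with k hk
    refine (convex_closedBall (u x₀) e).set_average_mem isClosed_closedBall (hpos _ (hrk k))
      (hfin _) ?_ (hint _)
    exact (ae_restrict_iff' measurableSet_ball).2 (Eventually.of_forall fun y hy =>
      hsub (ball_subset_ball hk.le hy))
  have := dist_le_of_le_geometric_two_of_tendsto₀ hstep hlim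
  simpa [ha, Real.dist_eq] using this

/-- By Lebesgue differentiation, almost every point has the property asserted here: the averages
of an integrable function over small balls around it are bounded. -/
lemma exists_point_lintegral_closedBall_le [SecondCountableTopology X] [IsLocallyFiniteMeasure μ]
    [IsUnifLocDoublingMeasure μ] (hμ : μ ≠ 0) {g : X → ℝ≥0∞} (hg : Measurable g)
    (hgi : ∫⁻ x, g x ∂μ ≠ ⊤) :
    ∃ x₀ : X, ∃ A : ℝ≥0∞, A ≠ ⊤ ∧ ∃ δ > 0, ∀ s, 0 < s → s < δ →
      ∫⁻ y in closedBall x₀ s, g y ∂μ ≤ A * μ (closedBall x₀ s) := by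
  have hne : (ae μ).NeBot := ae_neBot.2 hμ
  obtain ⟨x₀, hx, hxt⟩ := (((IsUnifLocDoublingMeasure.vitaliFamily μ 1).ae_tendsto_lintegral_div
    hg.aemeasurable hgi).and (ae_lt_top hg hgi)).exists
  refine ⟨x₀, g x₀ + 1, by finiteness, ?_⟩
  have h1 := hx.comp (IsUnifLocDoublingMeasure.tendsto_closedBall_filterAt μ (K := 1)
    (l := 𝓝[>] (0 : ℝ)) (fun _ => x₀) id tendsto_id (by
      filter_upwards [self_mem_nhdsWithin] with s hs
      exact mem_closedBall_self (by simpa using (mem_Ioi.1 hs).le)))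
  have h2 := h1.eventually_le_const (ENNReal.lt_add_right hxt.ne one_ne_zero)
  obtain ⟨δ, hδ, hsub⟩ := mem_nhdsGT_iff_exists_Ioo_subset.1 h2
  refine ⟨δ, hδ, fun s hs hsδ => ?_⟩
  have h3 : (∫⁻ y in closedBall x₀ s, g y ∂μ) / μ (closedBall x₀ s) ≤ g x₀ + 1 :=
    hsub ⟨hs, hsδ⟩
  by_cases h0 : μ (closedBall x₀ s) = 0
  · simp [setLIntegral_measure_zero _ _ h0]
  · by_cases ht : μ (closedBall x₀ s) = ⊤
    · simp [ht, ENNReal.mul_top]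
    · exact (ENNReal.div_le_iff h0 ht).1 h3

end Telescope

/-! ### The class of a good point -/

/-- under the standing assumptions and uniformly locally `p`-controlled
geometry, for every Borel `ρ : X → [0,∞]` with `∫ ρᵖ dμ < ∞` there is a `∼_ρ`-equivalence
class of positive (outer) `μ`-measure. -/
theorem statement16 {X : Type*} [MetricSpace X] [MeasurableSpace X] [BorelSpace X]
    [ProperSpace X] [ConnectedSpace X]
    (μ : Measure X) (hXinf : μ Set.univ = ⊤)
    (hball : ∀ (x : X) (r : ℝ), 0 < r → 0 < μ (ball x r) ∧ μ (ball x r) < ⊤)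
    (p : ℝ) (hp : 1 ≤ p)
    (hgeom : UniformlyLocallyControlledGeometry p μ)
    (ρ : X → ℝ≥0∞) (hρ : Measurable ρ) (hρp : (∫⁻ x, ρ x ^ p ∂μ) < ⊤) :
    ∃ x₀ : X, 0 < μ {y : X | RhoRel ρ x₀ y} := by
  obtain ⟨R₀, Cd, C, lam, hR₀, hCd, hC, hlam, hdbl, hpoin⟩ := hgeom
  have : IsLocallyFiniteMeasure μ := ⟨fun x => ⟨ball x 1, ball_mem_nhds x one_pos,
    (hball x 1 one_pos).2⟩⟩
  have hp0 : 0 < p := one_pos.trans_le hp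
  -- a real scale below `R₀`
  obtain ⟨R, hR, hdbl, hpoin⟩ : ∃ R : ℝ, 0 < R ∧
      (∀ (x : X) (r : ℝ), 0 < r → r ≤ R → μ (ball x (2 * r)) ≤ ENNReal.ofReal Cd * μ (ball x r)) ∧
      (∀ (u : X → ℝ) (g : X → ℝ≥0∞), LocallyIntegrable u μ → Measurable g →
        IsUpperGradient g u → ∀ (x : X) (r : ℝ), 0 < r → r ≤ R →
        ENNReal.ofReal (⨍ y in ball x r, |u y - ⨍ z in ball x r, u z ∂μ| ∂μ) ≤
          ENNReal.ofReal (C * r) *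
            ((∫⁻ y in ball x (lam * r), g y ^ p ∂μ) / μ (ball x (lam * r))) ^ (1 / p)) := by
    obtain ⟨R', h0, h1⟩ := exists_between hR₀
    have hlt : ∀ r : ℝ, r ≤ R'.toReal → ENNReal.ofReal r < R₀ := fun r hr =>
      (ENNReal.ofReal_le_of_le_toReal hr).trans_lt h1
    exact ⟨R'.toReal, ENNReal.toReal_pos h0.ne' h1.ne_top,
      fun x r hr hrR => hdbl x r hr (hlt r hrR),
      fun u g hu hg hug x r hr hrR => hpoin u g hu hg hug x r hr (hlt r hrR)⟩
  have : IsUnifLocDoublingMeasure μ := by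
    refine ⟨⟨Real.toNNReal Cd * Real.toNNReal Cd, ?_⟩⟩
    filter_upwards [Ioo_mem_nhdsGT (half_pos hR)] with s hs x
    calc μ (closedBall x (2 * s)) ≤ μ (ball x (2 * (2 * s))) :=
          measure_mono (closedBall_subset_ball (by linarith [hs.1]))
      _ ≤ ENNReal.ofReal Cd * (ENNReal.ofReal Cd * μ (ball x s)) :=
          (hdbl x (2 * s) (by linarith [hs.1]) (by linarith [hs.2])).trans
            (by gcongr; exact hdbl x s hs.1 (by linarith [hs.1, hs.2]))
      _ ≤ _ := by
          rw [← mul_assoc, ENNReal.coe_mul]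
          exact mul_le_mul_right (measure_mono ball_subset_closedBall) _
  have hμ0 : μ ≠ 0 := by
    rintro rfl
    simp at hXinf
  -- a lower semicontinuous majorant of `ρ ^ p`, and the resulting majorant `G` of `ρ`
  obtain ⟨g, hρg, hglsc, hgi⟩ := exists_le_lowerSemicontinuous_lintegral_ge μ (fun x => ρ x ^ p)
    (hρ.pow_const p) one_ne_zero
  have hgi' : ∫⁻ x, g x ∂μ ≠ ⊤ := ne_top_of_le_ne_top (by finiteness) hgi
  have hgm : Measurable g := hglsc.measurable
  obtain ⟨x₀, A, hA, δ, hδ, hAδ⟩ := exists_point_lintegral_closedBall_le hμ0 hgm hgi'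
  set G : X → ℝ≥0∞ := fun x => (g x + 1) ^ (1 / p) with hG
  have hGlsc : LowerSemicontinuous G := by
    have hc : Continuous fun y : ℝ≥0∞ => (y + 1) ^ (1 / p) :=
      ENNReal.continuous_rpow_const.comp (continuous_id.add continuous_const)
    exact hc.comp_lowerSemicontinuous hglsc fun a b hab => by
      simp only
      gcongr
  have hG1 : ∀ x, 1 ≤ G x := fun x => by
    have h : (1 : ℝ≥0∞) ^ (1 / p) ≤ (g x + 1) ^ (1 / p) := by
      gcongr
      exact le_add_self
    rwa [ENNReal.one_rpow] at h
  have hGp : ∀ x, G x ^ p = g x + 1 := fun x => by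
    simp only [hG]
    rw [← ENNReal.rpow_mul, one_div_mul_cancel hp0.ne', ENNReal.rpow_one]
  have hρG : ∀ x, ρ x ≤ G x := fun x => by
    rw [← ENNReal.rpow_le_rpow_iff hp0, hGp]
    exact le_add_right (hρg x)
  -- the finite chain distances from `x₀`
  set f : ℕ → X → ℝ := fun i x => (infConv G (i + 1) x).toReal with hf
  set ε : ℕ → ℝ := fun i => 1 / ((i : ℝ) + 1) with hε
  have hε0 : ∀ i, 0 < ε i := fun i => by simp only [hε]; positivity
  have hfof : ∀ i x, ENNReal.ofReal (f i x) = infConv G (i + 1) x := fun i x =>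
    ENNReal.ofReal_toReal (infConv_ne_top _ _)
  have hf1 : ∀ i x, 1 ≤ f i x := fun i x => by
    have := ENNReal.toReal_mono (infConv_ne_top _ _) (one_le_infConv hG1 (Nat.le_add_left 1 i) x)
    simpa using this
  have hf0 : ∀ i x, 0 ≤ f i x := fun i x => zero_le_one.trans (hf1 i x)
  have hfc : ∀ i, Continuous (f i) := fun i => continuous_infConv_toReal _
  set u : ℕ → X → ℝ := fun i => chainDist (f i) (ε i) x₀ with hu
  have huc : ∀ i, Continuous (u i) := fun i => continuous_chainDist (hf0 i) (hfc i) (hε0 i)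
  have hug : ∀ i, IsUpperGradient (fun x => infConv G (i + 1) x) (u i) := fun i => by
    simpa only [hfof] using isUpperGradient_chainDist (x₀ := x₀) (hf0 i) (hfc i) (hε0 i)
  have hu0 : ∀ i x, 0 ≤ u i x := fun i x => chainDist_nonneg (hf0 i) x
  -- the radius of the largest ball, small enough for all estimates at `x₀`
  obtain ⟨r, hr, hrR, hrR', hrδ⟩ : ∃ r, 0 < r ∧ r ≤ R ∧ lam * r ≤ R ∧ lam * r < δ := by
    refine ⟨min R (min R (δ / 2) / lam), by positivity, min_le_left _ _, ?_, ?_⟩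
    · calc lam * min R (min R (δ / 2) / lam) ≤ lam * (min R (δ / 2) / lam) := by
            gcongr; exact min_le_right _ _
        _ = min R (δ / 2) := by field_simp
        _ ≤ R := min_le_left _ _
    · calc lam * min R (min R (δ / 2) / lam) ≤ lam * (min R (δ / 2) / lam) := by
            gcongr; exact min_le_right _ _
        _ = min R (δ / 2) := by field_simp
        _ ≤ δ / 2 := min_le_right _ _
        _ < δ := half_lt_self hδ
  set A' : ℝ≥0∞ := (A + 1) * ENNReal.ofReal Cd with hA'
  have hA't : A' ^ (1 / p) ≠ ⊤ :=
    ENNReal.rpow_ne_top_of_nonneg (by positivity) (by finiteness)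
  have havg : ∀ i s, 0 < s → s ≤ lam * r →
      (∫⁻ y in ball x₀ s, infConv G (i + 1) y ^ p ∂μ) / μ (ball x₀ s) ≤ A' := by
    intro i s hs hsr
    rw [ENNReal.div_le_iff (hball x₀ s hs).1.ne' (hball x₀ s hs).2.ne]
    calc ∫⁻ y in ball x₀ s, infConv G (i + 1) y ^ p ∂μ
        ≤ ∫⁻ y in ball x₀ s, (g y + 1) ∂μ := lintegral_mono fun y => by
          rw [← hGp y]
          exact ENNReal.rpow_le_rpow ((infConv_le_min _ _).trans (min_le_left _ _)) hp0.le
      _ ≤ ∫⁻ y in closedBall x₀ s, (g y + 1) ∂μ := lintegral_mono_set ball_subset_closedBall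
      _ ≤ (A + 1) * μ (closedBall x₀ s) := by
          rw [lintegral_add_left hgm, setLIntegral_one, add_mul, one_mul]
          gcongr
          exact hAδ s hs (hsr.trans_lt hrδ)
      _ ≤ (A + 1) * (ENNReal.ofReal Cd * μ (ball x₀ s)) := by
          gcongr
          exact (measure_mono (closedBall_subset_ball (by linarith))).trans
            (hdbl x₀ s hs (hsr.trans hrR'))
      _ = A' * μ (ball x₀ s) := by rw [hA', mul_assoc]
  set E : ℝ := C * r * (A' ^ (1 / p)).toReal with hE
  have hrk : ∀ k : ℕ, 0 < r / 2 ^ k ∧ r / 2 ^ k ≤ r := fun k =>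
    ⟨by positivity, div_le_self hr.le (one_le_pow₀ one_le_two)⟩
  have hosc : ∀ i (k : ℕ), ⨍ y in ball x₀ (r / 2 ^ k),
      |u i y - ⨍ z in ball x₀ (r / 2 ^ k), u i z ∂μ| ∂μ ≤ E / 2 ^ k := by
    intro i k
    have hEk : E / 2 ^ k = C * (r / 2 ^ k) * (A' ^ (1 / p)).toReal := by rw [hE]; ring
    have hpos : 0 ≤ C * (r / 2 ^ k) := by positivity
    have h := hpoin (u i) _ (huc i).locallyIntegrable (measurable_infConv _) (hug i) x₀ (r / 2 ^ k)
      (hrk k).1 ((hrk k).2.trans hrR)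
    have h2 : ENNReal.ofReal (C * (r / 2 ^ k)) *
        ((∫⁻ y in ball x₀ (lam * (r / 2 ^ k)), infConv G (i + 1) y ^ p ∂μ) /
          μ (ball x₀ (lam * (r / 2 ^ k)))) ^ (1 / p) ≤ ENNReal.ofReal (E / 2 ^ k) := by
      rw [hEk, ENNReal.ofReal_mul hpos, ENNReal.ofReal_toReal hA't]
      gcongr
      exact havg i _ (mul_pos hlam (hrk k).1) (by gcongr; exact (hrk k).2)
    exact (ENNReal.ofReal_le_ofReal_iff (by rw [hEk]; positivity)).1 (h.trans h2)
  have hmeas : ∀ k : ℕ, μ.real (ball x₀ (r / 2 ^ k)) ≤ Cd * μ.real (ball x₀ (r / 2 ^ (k + 1))) := by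
    intro k
    have h := hdbl x₀ (r / 2 ^ (k + 1)) (hrk _).1 ((hrk _).2.trans hrR)
    rw [show 2 * (r / 2 ^ (k + 1)) = r / 2 ^ k by rw [pow_succ]; field_simp] at h
    have h2 := ENNReal.toReal_mono (by finiteness [(hball x₀ _ (hrk (k + 1)).1).2.ne]) h
    rwa [ENNReal.toReal_mul, ENNReal.toReal_ofReal (by linarith)] at h2
  -- the averages of the chain distances over `B(x₀, r)` are bounded uniformly in `i`
  have hmean : ∀ i, ⨍ y in ball x₀ r, u i y ∂μ ≤ 2 * (Cd * E) := by
    intro i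
    have h := average_sub_center_le (huc i) hr (by linarith) (fun s hs => (hball x₀ s hs).1.ne')
      hmeas (hosc i)
    rw [show u i x₀ = 0 from chainDist_self (hf0 i), sub_zero] at h
    exact (le_abs_self _).trans h
  have hlint : ∀ i, ∫⁻ y in ball x₀ r, ENNReal.ofReal (u i y) ∂μ ≤
      ENNReal.ofReal (μ.real (ball x₀ r) * (2 * (Cd * E))) := by
    intro i
    rw [← ofReal_integral_eq_lintegral_ofReal
      (((huc i).continuousOn.integrableOn_compact (isCompact_closedBall x₀ r)).mono_set
        ball_subset_closedBall) (Eventually.of_forall (hu0 i))]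
    refine ENNReal.ofReal_le_ofReal ?_
    have hp' : 0 < μ.real (ball x₀ r) :=
      ENNReal.toReal_pos (hball x₀ r hr).1.ne' (hball x₀ r hr).2.ne
    have h := hmean i
    rw [setAverage_eq, smul_eq_mul, inv_mul_le_iff₀ hp'] at h
    exact h
  have hmu : ∀ i, Measurable fun y => ENNReal.ofReal (u i y) := fun i =>
    (huc i).measurable.ennreal_ofReal
  -- the uniform bound on the averages passes to the pointwise lower limit (Fatou)
  have hliminf : ∀ᵐ x ∂μ.restrict (ball x₀ r),
      liminf (fun i => ENNReal.ofReal (u i x)) atTop < ⊤ := by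
    refine ae_lt_top (Measurable.liminf hmu) (ne_top_of_le_ne_top (ENNReal.ofReal_ne_top
      (r := μ.real (ball x₀ r) * (2 * (Cd * E)))) ((lintegral_liminf_le hmu).trans (liminf_le_of_le (by isBoundedDefault) fun b hb => ?_)))
    obtain ⟨i, hi⟩ := hb.exists
    exact hi.trans (hlint i)
  refine ⟨x₀, (hball x₀ r hr).1.trans_le (measure_mono_ae ?_)⟩
  filter_upwards [(ae_restrict_iff' measurableSet_ball).1 hliminf] with x hx hxB
  -- a bound on infinitely many chain distances yields a limit curve
  obtain ⟨N, hN⟩ := ENNReal.exists_nat_gt (hx hxB).ne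
  obtain ⟨φ, hφ, hφN⟩ := extraction_of_frequently_atTop
    (frequently_lt_of_liminf_lt (by isBoundedDefault) hN)
  have hcurve : ∀ k, ∃ (L : ℝ) (γ : ℝ → X), L ∈ Icc (0 : ℝ) N ∧ Measurable γ ∧
      (∀ t ≤ 0, γ t = x₀) ∧ (∀ t, L ≤ t → γ t = x) ∧
      (∀ s t, s ≤ t → dist (γ s) (γ t) ≤ t - s + ε (φ k)) ∧
      ∫⁻ t in Ico 0 L, infConv G (φ k + 1) (γ t) ≤ ENNReal.ofReal N := by
    intro k
    have hlt : u (φ k) x < N := by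
      by_contra! h
      have h2 := ENNReal.ofReal_le_ofReal h
      rw [ENNReal.ofReal_natCast] at h2
      exact absurd (hφN k) (not_lt.2 h2)
    obtain ⟨c, hc, hreach⟩ := exists_chain_lt (hε0 _) hlt
    obtain ⟨L, γ, hL, hLc, hm, h0, h1, hd, hint⟩ := hreach.exists_curve (hf1 _) (hε0 _).le
    refine ⟨L, γ, ⟨hL, hLc.trans hc.le⟩, hm, h0, h1, hd, ?_⟩
    simp only [hfof] at hint
    exact hint.trans (ENNReal.ofReal_le_ofReal hc.le)
  choose L γ hL hm h0 h1 hd hint using hcurve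
  have hεlim : Tendsto ε atTop (𝓝 0) := tendsto_one_div_add_atTop_nhds_zero_nat
  obtain ⟨l, hl, η, hη, hη0, hηl, hηi⟩ := exists_limit_curve hGlsc (n := fun k => φ k + 1)
    ((tendsto_add_atTop_nat 1).comp hφ.tendsto_atTop) (ε := fun k => ε (φ k))
    (fun k => (hε0 _).le) (fun k => by
      simp only [hε]
      rw [div_le_one (by positivity)]
      linarith [Nat.cast_nonneg (α := ℝ) (φ k)])
    (hεlim.comp hφ.tendsto_atTop) hL hm h0 h1 hd hint
  exact Or.inr ⟨l, hl, η, hη, hη0, hηl, (lintegral_mono fun t => hρG (η t)).trans_lt hηi⟩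
end
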